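/- Let X₁, X₂ be locally compact Polish metric spaces, let C : X₁ × 𝒫(X₂) → (−∞,+∞] be lower semi-continuous, bounded from below, with C(x₁,·) convex on 𝒫(X₂) for every x₁ ∈ X₁, and let F₁, F₂ be superlinear admissible entropy functions such that F₂ has property (BM) on X₂. Then for every μ₁ ∈ ℳ(X₁) and μ₂ ∈ ℳ(X₂): ℰ_C(μ₁,μ₂) = sup_{(φ₁,φ₂)∈Λ} Σ_{i=1}^2 ∫_{X_i} F_i°(φ_i) dμ_i = sup_{(φ₁,φ₂)∈Λ_R} Σ_{i=1}^2 ∫_{X_i} φ_i dμ_i = sup_{φ∈C_b(X₂)} [∫_{X₁} F₁°(R_C φ) dμ₁ + ∫_{X₂} F₂°(−φ) dμ₂], where R_C φ(x₁) := inf_{p∈𝒫(X₂)} {C(x₁,p) + ∫_{X₂} φ dp}. -/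

import Mathlib

open MeasureTheory Filter Set Topology
open scoped ENNReal NNReal BoundedContinuousFunction

noncomputable section

/-- The "positive part" of an extended real number, as an element of `ℝ≥0∞`. -/
def posE (a : EReal) : ℝ≥0∞ := if a = ⊤ then ⊤ else ENNReal.ofReal a.toReal

/-- Integral of an `EReal`-valued function: positive part minus negative part
(in `EReal`, so that it is always defined). -/
def eIntegral {α : Type*} [MeasurableSpace α] (μ : Measure α) (f : α → EReal) : EReal :=
  ((∫⁻ x, posE (f x) ∂μ : ℝ≥0∞) : EReal) - ((∫⁻ x, posE (-(f x)) ∂μ : ℝ≥0∞) : EReal)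

/-- The recession constant `lim_{s→∞} G(s)/s` (as a `limsup`, which coincides with the
limit for convex functions). -/
def recessionOf (G : ℝ → ℝ≥0∞) : ℝ≥0∞ :=
  Filter.limsup (fun s : ℝ => G s / ENNReal.ofReal s) Filter.atTop

/-- An admissible entropy function: a convex, lower semicontinuous function
`F : [0,∞) → [0,∞]` which is finite at some positive point. -/
structure EntropyFn where
  F : ℝ → ℝ≥0∞
  convex' : ∀ a ∈ Ici (0:ℝ), ∀ b ∈ Ici (0:ℝ), ∀ t : ℝ, 0 ≤ t → t ≤ 1 →
    F (t * a + (1 - t) * b) ≤ ENNReal.ofReal t * F a + ENNReal.ofReal (1 - t) * F b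
  lsc : LowerSemicontinuousOn F (Ici (0:ℝ))
  dom : ∃ s : ℝ, 0 < s ∧ F s ≠ ∞

namespace EntropyFn

/-- The recession constant `F'_∞ = lim_{s→∞} F(s)/s`. -/
def recC (F : EntropyFn) : ℝ≥0∞ := recessionOf F.F

/-- `F` is superlinear if `F'_∞ = ∞`. -/
def Superlinear (F : EntropyFn) : Prop := F.recC = ∞

/-- `F°(φ) := inf_{s ≥ 0} (φ·s + F(s))`, extended to `EReal` arguments. -/
def circ (F : EntropyFn) (φ : EReal) : EReal :=
  ⨅ s : Ici (0:ℝ), φ * ((s : ℝ) : EReal) + ((F.F (s : ℝ) : ℝ≥0∞) : EReal)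

/-- The (interior of the) domain of `F°` is taken inside the set where `F°` is not `-∞`. -/
def circDom (F : EntropyFn) : Set ℝ := {φ : ℝ | F.circ (φ : EReal) ≠ ⊥}

/-- The reverse entropy function `R(r) = r·F(1/r)` for `r > 0`, with `R(0) = F'_∞`. -/
def revF (F : EntropyFn) (r : ℝ) : ℝ≥0∞ :=
  if 0 < r then ENNReal.ofReal r * F.F (1 / r) else F.recC

/-- The Legendre conjugate `R*(ψ) = sup_{s ≥ 0} (s·ψ − R(s))` of the reverse function. -/
def revConj (F : EntropyFn) (ψ : ℝ) : EReal :=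
  ⨆ s : Ici (0:ℝ), (((s : ℝ) * ψ : ℝ) : EReal) - ((F.revF (s : ℝ) : ℝ≥0∞) : EReal)

end EntropyFn

/-- The entropy functional `ℱ(γ|μ) = ∫ F(dγ/dμ) dμ + F'_∞ · γ^⊥(X)`, where
`γ = (dγ/dμ)·μ + γ^⊥` is the Lebesgue decomposition of `γ` with respect to `μ`. -/
def entF {X : Type*} [MeasurableSpace X] (F : EntropyFn) (γ μ : Measure X) : ℝ≥0∞ :=
  (∫⁻ x, F.F ((γ.rnDeriv μ x).toReal) ∂μ) + F.recC * (γ.singularPart μ) Set.univ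

/-- The reverse entropy functional `ℛ(μ|γ) = ∫ R(dμ/dγ) dγ + R'_∞ · μ^⊥(X)`. -/
def revEntF {X : Type*} [MeasurableSpace X] (F : EntropyFn) (μ γ : Measure X) : ℝ≥0∞ :=
  (∫⁻ x, F.revF ((μ.rnDeriv γ x).toReal) ∂γ) + recessionOf F.revF * (μ.singularPart γ) Set.univ

section WOET

variable {X₁ X₂ : Type*} [MeasurableSpace X₁] [MeasurableSpace X₂]

/-- The weak entropy-transport cost
`ℰ_C(γ|μ₁,μ₂) = ℱ₁(γ₁|μ₁) + ℱ₂(γ₂|μ₂) + ∫ C(x₁, γ_{x₁}) dγ₁(x₁)`. -/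
def wCost [StandardBorelSpace X₂] [Nonempty X₂]
    (C : X₁ → ProbabilityMeasure X₂ → EReal) (F₁ F₂ : EntropyFn)
    (μ₁ : Measure X₁) (μ₂ : Measure X₂)
    (γ : Measure (X₁ × X₂)) (hγ : IsFiniteMeasure γ) : EReal :=
  haveI := hγ
  ((entF F₁ γ.fst μ₁ : ℝ≥0∞) : EReal) + ((entF F₂ γ.snd μ₂ : ℝ≥0∞) : EReal) +
    eIntegral γ.fst (fun x₁ => C x₁ ⟨γ.condKernel x₁, inferInstance⟩)

/-- The weak optimal entropy-transport value `ℰ_C(μ₁,μ₂)`. -/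
def wOpt [StandardBorelSpace X₂] [Nonempty X₂]
    (C : X₁ → ProbabilityMeasure X₂ → EReal) (F₁ F₂ : EntropyFn)
    (μ₁ : Measure X₁) (μ₂ : Measure X₂) : EReal :=
  sInf { e : EReal | ∃ (γ : Measure (X₁ × X₂)) (hγ : IsFiniteMeasure γ),
    e = wCost C F₁ F₂ μ₁ μ₂ γ hγ }

variable [TopologicalSpace X₁] [TopologicalSpace X₂]

/-- The dual feasible set `Λ`. -/
def lamSet (C : X₁ → ProbabilityMeasure X₂ → EReal) (F₁ F₂ : EntropyFn) :
    Set ((X₁ →ᵇ ℝ) × (X₂ →ᵇ ℝ)) :=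
  { φ | (∀ x, φ.1 x ∈ interior F₁.circDom) ∧ (∀ x, φ.2 x ∈ interior F₂.circDom) ∧
      ∀ (x₁ : X₁) (p : ProbabilityMeasure X₂),
        ((φ.1 x₁ + ∫ x₂, φ.2 x₂ ∂(p : Measure X₂) : ℝ) : EReal) ≤ C x₁ p }

/-- The dual feasible set `Λ_R`. -/
def lamRSet (C : X₁ → ProbabilityMeasure X₂ → EReal) (F₁ F₂ : EntropyFn) :
    Set ((X₁ →ᵇ ℝ) × (X₂ →ᵇ ℝ)) :=
  { φ | (∃ b : ℝ, ((b : ℝ) : EReal) < ((F₁.F 0 : ℝ≥0∞) : EReal) ∧ ∀ x, φ.1 x ≤ b) ∧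
        (∃ b : ℝ, ((b : ℝ) : EReal) < ((F₂.F 0 : ℝ≥0∞) : EReal) ∧ ∀ x, φ.2 x ≤ b) ∧
        ∀ (x₁ : X₁) (p : ProbabilityMeasure X₂),
          F₁.revConj (φ.1 x₁) + eIntegral (p : Measure X₂) (fun x₂ => F₂.revConj (φ.2 x₂))
            ≤ C x₁ p }

/-- The dual feasible set `Λ_ET` (constraints tested against all pairs of nonnegative finite
measures; on all other signed measures `ET = +∞`, so those constraints are vacuous). -/
def lamETSet [StandardBorelSpace X₂] [Nonempty X₂]
    (C : X₁ → ProbabilityMeasure X₂ → EReal) (F₁ F₂ : EntropyFn) :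
    Set ((X₁ →ᵇ ℝ) × (X₂ →ᵇ ℝ)) :=
  { φ | ∀ (μ₁ : Measure X₁) (μ₂ : Measure X₂), IsFiniteMeasure μ₁ → IsFiniteMeasure μ₂ →
      (((∫ x, φ.1 x ∂μ₁) + ∫ x, φ.2 x ∂μ₂ : ℝ) : EReal) ≤ wOpt C F₁ F₂ μ₁ μ₂ }

/-- The set `Λ_ET^<`. -/
def lamETltSet [StandardBorelSpace X₂] [Nonempty X₂]
    (C : X₁ → ProbabilityMeasure X₂ → EReal) (F₁ F₂ : EntropyFn) :
    Set ((X₁ →ᵇ ℝ) × (X₂ →ᵇ ℝ)) :=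
  { φ ∈ lamETSet C F₁ F₂ |
      (∃ b : ℝ, ((b : ℝ) : EReal) < ((F₁.F 0 : ℝ≥0∞) : EReal) ∧ ∀ x, φ.1 x ≤ b) ∧
      (∃ b : ℝ, ((b : ℝ) : EReal) < ((F₂.F 0 : ℝ≥0∞) : EReal) ∧ ∀ x, φ.2 x ≤ b) }

/-- `R_C φ(x₁) := inf_{p ∈ 𝒫(X₂)} (C(x₁,p) + ∫ φ dp)`. -/
def RCfun (C : X₁ → ProbabilityMeasure X₂ → EReal) (φ : X₂ →ᵇ ℝ) (x₁ : X₁) : EReal :=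
  ⨅ p : ProbabilityMeasure X₂, C x₁ p + ((∫ x₂, φ x₂ ∂(p : Measure X₂) : ℝ) : EReal)

/-- Property (BM) of an admissible entropy function on a space `X`. -/
def HasBM (X : Type*) [TopologicalSpace X] [MeasurableSpace X] (F : EntropyFn) : Prop :=
  ∀ ψ : X →ᵇ ℝ, (∃ b : ℝ, ((b : ℝ) : EReal) < ((F.F 0 : ℝ≥0∞) : EReal) ∧ ∀ x, ψ x ≤ b) →
    ∃ s : X → ℝ, Measurable s ∧ (∃ M : ℝ, ∀ x, |s x| ≤ M) ∧ (∀ x, 0 < s x) ∧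
      ∀ x, ((F.revF (s x) : ℝ≥0∞) : EReal) + F.revConj (ψ x) = ((s x * ψ x : ℝ) : EReal)

end WOET

/-- The functional `ET` extended to pairs of finite signed measures:
it equals `ℰ_C(μ₁,μ₂)` when both arguments are (induced by) nonnegative finite measures,
and `+∞` otherwise. -/
def ETsgn {X₁ X₂ : Type*} [MeasurableSpace X₁] [MeasurableSpace X₂]
    [StandardBorelSpace X₂] [Nonempty X₂]
    (C : X₁ → ProbabilityMeasure X₂ → EReal) (F₁ F₂ : EntropyFn)
    (ν₁ : SignedMeasure X₁) (ν₂ : SignedMeasure X₂) : EReal :=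
  sInf { e : EReal | ∃ (μ₁ : Measure X₁) (h₁ : IsFiniteMeasure μ₁)
      (μ₂ : Measure X₂) (h₂ : IsFiniteMeasure μ₂),
      ν₁ = @Measure.toSignedMeasure X₁ _ μ₁ h₁ ∧ ν₂ = @Measure.toSignedMeasure X₂ _ μ₂ h₂ ∧
      e = wOpt C F₁ F₂ μ₁ μ₂ }

section Martingale

variable {X : Set ℝ}

/-- The martingale condition for a finite measure on `X × X`:
`∫ y dγ_x(y) = x` for `γ₁`-a.e. `x`. -/
def martCond [StandardBorelSpace ↥X] [Nonempty ↥X]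
    (γ : Measure (↥X × ↥X)) (hγ : IsFiniteMeasure γ) : Prop :=
  haveI := hγ
  ∀ᵐ x ∂γ.fst, (∫ y, (y : ℝ) ∂(γ.condKernel x)) = (x : ℝ)

/-- The martingale optimal entropy transport value `ℰ_M(μ₁,μ₂)` (with an `EReal`-valued
cost `c`). -/
def eMart [StandardBorelSpace ↥X] [Nonempty ↥X]
    (c : ↥X → ↥X → EReal) (F₁ F₂ : EntropyFn) (μ₁ μ₂ : Measure ↥X) : EReal :=
  sInf { e : EReal | ∃ (γ : Measure (↥X × ↥X)) (hγ : IsFiniteMeasure γ), martCond γ hγ ∧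
    e = ((entF F₁ γ.fst μ₁ : ℝ≥0∞) : EReal) + ((entF F₂ γ.snd μ₂ : ℝ≥0∞) : EReal) +
        eIntegral γ (fun q => c q.1 q.2) }

/-- The martingale optimal entropy transport value `ℰ_M(μ₁,μ₂)` (with a `[0,∞]`-valued
cost `c`). -/
def eMartNN [StandardBorelSpace ↥X] [Nonempty ↥X]
    (c : ↥X → ↥X → ℝ≥0∞) (F₁ F₂ : EntropyFn) (μ₁ μ₂ : Measure ↥X) : EReal :=
  sInf { e : EReal | ∃ (γ : Measure (↥X × ↥X)) (hγ : IsFiniteMeasure γ), martCond γ hγ ∧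
    e = ((entF F₁ γ.fst μ₁ + entF F₂ γ.snd μ₂ + ∫⁻ q, c q.1 q.2 ∂γ : ℝ≥0∞) : EReal) }

/-- The dual feasible set `Λ_M` for the martingale problem. -/
def lamM (c : ↥X → ↥X → EReal) (F₁ F₂ : EntropyFn) : Set ((↥X →ᵇ ℝ) × (↥X →ᵇ ℝ)) :=
  { φ | (∀ x, φ.1 x ∈ interior F₁.circDom) ∧ (∀ x, φ.2 x ∈ interior F₂.circDom) ∧
      ∃ h : ↥X →ᵇ ℝ, ∀ x₁ x₂ : ↥X,
        ((φ.1 x₁ + φ.2 x₂ + h x₁ * ((x₂ : ℝ) - (x₁ : ℝ)) : ℝ) : EReal) ≤ c x₁ x₂ }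

/-- The perspective function `r·F(θ/r)` with the convention `r·F(θ/r) = θ·F'_∞` for `r = 0`. -/
def perspFn (F : EntropyFn) (r θ : ℝ) : ℝ≥0∞ :=
  if r = 0 then ENNReal.ofReal θ * F.recC else ENNReal.ofReal r * F.F (θ / r)

/-- The homogeneous marginal perspective cost `H(x₁,r₁;x₂,r₂)` (the dependence on
`(x₁,x₂)` is through the value `c = c(x₁,x₂)`). -/
def Hcost (F₁ F₂ : EntropyFn) (c : ℝ≥0∞) (r₁ r₂ : ℝ) : ℝ≥0∞ :=
  if c ≠ ∞ then
    ⨅ θ : Ioi (0:ℝ), perspFn F₁ r₁ (θ : ℝ) + perspFn F₂ r₂ (θ : ℝ) + ENNReal.ofReal (θ : ℝ) * c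
  else F₁.F 0 * ENNReal.ofReal r₁ + F₂.F 0 * ENNReal.ofReal r₂

/-- The functional `ℋ(μ₁,μ₂|γ)`. -/
def hMargFun (F₁ F₂ : EntropyFn) (c : ↥X → ↥X → ℝ≥0∞) (μ₁ μ₂ : Measure ↥X)
    (γ : Measure (↥X × ↥X)) : ℝ≥0∞ :=
  (∫⁻ q, Hcost F₁ F₂ (c q.1 q.2) ((μ₁.rnDeriv γ.fst q.1).toReal)
      ((μ₂.rnDeriv γ.snd q.2).toReal) ∂γ)
    + F₁.F 0 * (μ₁.singularPart γ.fst) Set.univ + F₂.F 0 * (μ₂.singularPart γ.snd) Set.univ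

/-- The functional `ℛ(μ₁,μ₂|γ)`. -/
def rMargFun (F₁ F₂ : EntropyFn) (c : ↥X → ↥X → ℝ≥0∞) (μ₁ μ₂ : Measure ↥X)
    (γ : Measure (↥X × ↥X)) : ℝ≥0∞ :=
  revEntF F₁ μ₁ γ.fst + revEntF F₂ μ₂ γ.snd + ∫⁻ q, c q.1 q.2 ∂γ

/-- The first `p`-homogeneous marginal of a measure on `Y × Y`, `Y = X × [0,∞)`. -/
def hMarg1 (p : ℝ) (α : Measure ((↥X × ℝ≥0) × (↥X × ℝ≥0))) : Measure ↥X :=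
  Measure.map (fun q => q.1.1) (α.withDensity fun q => (q.1.2 : ℝ≥0∞) ^ p)

/-- The second `p`-homogeneous marginal of a measure on `Y × Y`, `Y = X × [0,∞)`. -/
def hMarg2 (p : ℝ) (α : Measure ((↥X × ℝ≥0) × (↥X × ℝ≥0))) : Measure ↥X :=
  Measure.map (fun q => q.2.1) (α.withDensity fun q => (q.2.2 : ℝ≥0∞) ^ p)

/-- Membership in the homogeneous constraint set `ℋ^p_{M,≤}(μ₁,μ₂)`. -/
def memHpM (p : ℝ) (μ₁ μ₂ : Measure ↥X) (α : Measure ((↥X × ℝ≥0) × (↥X × ℝ≥0))) : Prop :=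
  IsFiniteMeasure α ∧ (∫⁻ q, (q.1.2 : ℝ≥0∞) ^ p + (q.2.2 : ℝ≥0∞) ^ p ∂α) ≠ ∞ ∧
    hMarg1 p α ≤ μ₁ ∧ hMarg2 p α ≤ μ₂ ∧
    ∀ h : ↥X →ᵇ ℝ, (∫ q, h q.1.1 * ((q.2.1 : ℝ) - (q.1.1 : ℝ)) ∂α) = 0

end Martingale

/-!
Young's inequality `F°(φ) ≤ φ s + F(s)`, integrated along the marginals of a plan and its
disintegration, shows that no dual value exceeds the cost of a plan. For a superlinear entropy
function, `R*(ψ) ≤ φ` if and only if `ψ ≤ F°(φ)`, so the change of variables `ψ = F°(φ) - ε`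
identifies the values of the programs over `Λ` and `Λ_R`.

For the absence of a duality gap, relax a plan `γ` to a measure `P` on `X₁ × 𝒫(X₂)`: the cost
becomes linear in `P`, and the dual constraint becomes a pointwise inequality between functions on
`X₁ × 𝒫(X₂)`. Embed `X₁` and `X₂` in the Hilbert cube and approximate the extended cost from below
by continuous functions. On the resulting compact space the dual problem has a Lagrange multiplier,
by Hahn–Banach, and this is a measure `P`, by Riesz. Superlinearity makes both marginals of `P`
absolutely continuous, so `P` does not charge the points added by the embedding. Replacing the
conditional laws of `P` on `𝒫(X₂)` by their barycenters turns `P` into a plan, and by Jensen's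
inequality for the convex function `C(x, ·)` this does not increase the cost.
-/

open TopologicalSpace ProbabilityTheory
section AffineMinorant

variable {E : Type*} [AddCommGroup E] [Module ℝ E] [TopologicalSpace E]

lemma map_prodMk_eq_add_mul (f : E × ℝ →L[ℝ] ℝ) (y : E) (t : ℝ) :
    f (y, t) = f.comp (.inl ℝ E ℝ) y + f (0, 1) * t := by
  have hyt : (y, t) = (y, (0 : ℝ)) + t • ((0 : E), (1 : ℝ)) := by simp
  rw [hyt, map_add, map_smul]
  simp [mul_comm]

lemma nonneg_of_forall_ge_lt_add_mul {u v α s₀ : ℝ} (h : ∀ s ≥ s₀, u < v + α * s) : 0 ≤ α := by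
  by_contra! hα
  have hs := h (max s₀ ((u - v) / α)) (le_max_left _ _)
  have hle : α * max s₀ ((u - v) / α) ≤ α * ((u - v) / α) :=
    mul_le_mul_of_nonpos_left (le_max_right _ _) hα.le
  rw [mul_div_cancel₀ _ hα.ne] at hle
  linarith

variable {A : Set (E × ℝ)} {x : E} {t₀ : ℝ}

lemma exists_affine_minorant_of_vertical {m : ℝ} (hlow : ∀ q ∈ A, m ≤ q.2) {f : E →L[ℝ] ℝ}
    {u : ℝ} (hA : ∀ q ∈ A, u < f q.1) (hx : f x < u) :
    ∃ (l : E →L[ℝ] ℝ) (c : ℝ), (∀ q ∈ A, l q.1 + c ≤ q.2) ∧ t₀ < l x + c := by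
  have hη : 0 < u - f x := sub_pos.2 hx
  set k := (|t₀ - m| + 1) / (u - f x) with hk
  have hk0 : 0 < k := by positivity
  refine ⟨-(k • f), m + k * u, fun q hq => ?_, ?_⟩
  · have hku : k * u ≤ k * f q.1 := mul_le_mul_of_nonneg_left (hA q hq).le hk0.le
    have hm := hlow q hq
    simp only [neg_apply, smul_apply, smul_eq_mul]
    linarith
  · have hkη : k * u - k * f x = |t₀ - m| + 1 := by rw [← mul_sub, hk, div_mul_cancel₀ _ hη.ne']
    have habs := le_abs_self (t₀ - m)
    simp only [neg_apply, smul_apply, smul_eq_mul]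
    linarith

lemma exists_affine_minorant_of_nonvertical {f : E →L[ℝ] ℝ} {u α : ℝ} (hα : 0 < α)
    (hA : ∀ q ∈ A, u < f q.1 + α * q.2) (hx : f x + α * t₀ < u) :
    ∃ (l : E →L[ℝ] ℝ) (c : ℝ), (∀ q ∈ A, l q.1 + c ≤ q.2) ∧ t₀ < l x + c := by
  have hval (y : E) : (-(α⁻¹ • f)) y + u / α = (u - f y) / α := by
    simp only [neg_apply, smul_apply, smul_eq_mul]
    ring
  refine ⟨-(α⁻¹ • f), u / α, fun q hq => ?_, ?_⟩
  · rw [hval, div_le_iff₀ hα]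
    linarith [hA q hq]
  · rw [hval, lt_div_iff₀ hα]
    linarith

variable [IsTopologicalAddGroup E] [ContinuousSMul ℝ E] [LocallyConvexSpace ℝ E]

theorem exists_affine_minorant_of_notMem_closure (hA : Convex ℝ A)
    (hup : ∀ y t t', (y, t) ∈ A → t ≤ t' → (y, t') ∈ A) {m : ℝ} (hlow : ∀ q ∈ A, m ≤ q.2)
    (hx : (x, t₀) ∉ closure A) :
    ∃ (l : E →L[ℝ] ℝ) (c : ℝ), (∀ q ∈ A, l q.1 + c ≤ q.2) ∧ t₀ < l x + c := by
  rcases A.eq_empty_or_nonempty with rfl | ⟨⟨y₀, s₀⟩, hy₀⟩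
  · exact ⟨0, t₀ + 1, by simp, by simp⟩
  obtain ⟨f, u, hfx, hfA⟩ :=
    geometric_hahn_banach_point_closed hA.closure isClosed_closure hx
  have hfA' (q) (hq : q ∈ A) : u < f.comp (.inl ℝ E ℝ) q.1 + f (0, 1) * q.2 := by
    rw [← map_prodMk_eq_add_mul]
    exact hfA q (subset_closure hq)
  rw [map_prodMk_eq_add_mul] at hfx
  have hα : 0 ≤ f (0, 1) :=
    nonneg_of_forall_ge_lt_add_mul (v := f.comp (.inl ℝ E ℝ) y₀)
      fun s hs => hfA' (y₀, s) (hup _ _ _ hy₀ hs)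
  rcases hα.eq_or_lt with hα | hα
  · rw [← hα, zero_mul, add_zero] at hfx
    simp only [← hα, zero_mul, add_zero] at hfA'
    exact exists_affine_minorant_of_vertical hlow hfA' hfx
  · exact exists_affine_minorant_of_nonvertical hα hfA' hfx

-- `T` stands for an inclusion; passing through it lets `S` be a convex subset of `E` such as
-- `[0, ∞)` or a space of probability measures that is not literally a subtype.
theorem exists_affine_minorant_lt {S : Type*} {T : S → E} {g : S → ℝ≥0∞}
    (hg : ∀ p q (a b : ℝ), 0 ≤ a → 0 ≤ b → a + b = 1 → ∃ r, T r = a • T p + b • T q ∧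
      g r ≤ ENNReal.ofReal a * g p + ENNReal.ofReal b * g q)
    {m : S} (hlsc : ∀ t < g m, ∀ᶠ s in comap T (𝓝 (T m)), t < g s)
    {t : ℝ} (ht : ENNReal.ofReal t < g m) :
    ∃ (l : E →L[ℝ] ℝ) (c : ℝ), (∀ s, ENNReal.ofReal (l (T s) + c) ≤ g s) ∧ t < l (T m) + c := by
  let A : Set (E × ℝ) := {q | ∃ s, T s = q.1 ∧ g s ≤ ENNReal.ofReal q.2 ∧ 0 ≤ q.2}
  have hconv : Convex ℝ A := by
    rintro ⟨_, u⟩ ⟨p, rfl, hpu, hu⟩ ⟨_, v⟩ ⟨q, rfl, hqv, hv⟩ a b ha hb hab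
    obtain ⟨r, hr, hgr⟩ := hg p q a b ha hb hab
    have hab0 : 0 ≤ a * u + b * v := add_nonneg (mul_nonneg ha hu) (mul_nonneg hb hv)
    refine ⟨r, hr, hgr.trans ?_, hab0⟩
    simp only [Prod.snd_add, Prod.smul_snd, smul_eq_mul]
    rw [ENNReal.ofReal_add (mul_nonneg ha hu) (mul_nonneg hb hv), ENNReal.ofReal_mul ha,
      ENNReal.ofReal_mul hb]
    gcongr
  have hup (y t t') : (y, t) ∈ A → t ≤ t' → (y, t') ∈ A := by
    rintro ⟨s, hs, hgs, ht⟩ htt'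
    exact ⟨s, hs, hgs.trans (ENNReal.ofReal_le_ofReal htt'), ht.trans htt'⟩
  have hmem : (T m, t) ∉ closure A := by
    obtain ⟨t', htt', ht'm⟩ := exists_between ht
    have hfst : ∀ᶠ y in 𝓝 (T m), ∀ s, T s = y → t' < g s := eventually_comap.1 (hlsc t' ht'm)
    have hsnd : ∀ᶠ u in 𝓝 t, ENNReal.ofReal u < t' :=
      (ENNReal.continuous_ofReal.tendsto t).eventually (gt_mem_nhds htt')
    rw [mem_closure_iff_frequently, not_frequently, nhds_prod_eq]
    filter_upwards [hfst.prod_mk hsnd]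
    rintro ⟨y, u⟩ ⟨hy, hu⟩ ⟨s, hs, hgs, -⟩
    exact ((hy s hs).trans_le hgs).not_gt hu
  obtain ⟨l, c, hl, hlt⟩ := exists_affine_minorant_of_notMem_closure hconv hup
    (fun _ ⟨_, _, _, h⟩ => h) hmem
  refine ⟨l, c, fun s => ?_, hlt⟩
  by_cases hs : g s = ∞
  · exact hs ▸ le_top
  · exact (ENNReal.ofReal_le_iff_le_toReal hs).2
      (hl (T s, (g s).toReal) ⟨s, rfl, (ENNReal.ofReal_toReal hs).ge, ENNReal.toReal_nonneg⟩)

end AffineMinorant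

namespace EntropyFn

variable {F : EntropyFn}

lemma le_circ_iff {c φ : ℝ} :
    (c : EReal) ≤ F.circ φ ↔ ∀ s, 0 ≤ s → F.F s ≠ ∞ → c ≤ φ * s + (F.F s).toReal := by
  rw [circ, le_iInf_iff, Subtype.forall]
  refine forall₂_congr fun s _ => ?_
  by_cases hs : F.F s = ∞
  · simp [hs, ← EReal.coe_mul]
  · rw [← EReal.coe_ennreal_toReal hs, forall_prop_of_true hs]
    norm_cast

lemma circ_mono (F : EntropyFn) : Monotone F.circ := by
  refine fun a b hab => iInf_mono fun s => ?_
  gcongr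
  exact_mod_cast s.2

lemma circ_le_mul_add (F : EntropyFn) (φ : EReal) {s : ℝ} (hs : 0 ≤ s) :
    F.circ φ ≤ φ * s + F.F s :=
  iInf_le_of_le ⟨s, hs⟩ le_rfl

lemma toReal_convex {a b t : ℝ} (ha : 0 ≤ a) (hb : 0 ≤ b) (ht : 0 ≤ t) (ht' : t ≤ 1)
    (hFa : F.F a ≠ ∞) (hFb : F.F b ≠ ∞) : F.F (t * a + (1 - t) * b) ≠ ∞ ∧
      (F.F (t * a + (1 - t) * b)).toReal ≤ t * (F.F a).toReal + (1 - t) * (F.F b).toReal := by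
  have hle := F.convex' a ha b hb t ht ht'
  have hta : ENNReal.ofReal t * F.F a ≠ ∞ := ENNReal.mul_ne_top ENNReal.ofReal_ne_top hFa
  have htb : ENNReal.ofReal (1 - t) * F.F b ≠ ∞ := ENNReal.mul_ne_top ENNReal.ofReal_ne_top hFb
  have htop := ENNReal.add_ne_top.2 ⟨hta, htb⟩
  refine ⟨ne_top_of_le_ne_top htop hle, ?_⟩
  simpa only [ENNReal.toReal_add hta htb, ENNReal.toReal_mul, ENNReal.toReal_ofReal ht,
    ENNReal.toReal_ofReal (sub_nonneg.2 ht')] using ENNReal.toReal_mono htop hle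

lemma Superlinear.exists_ge_mul_le (hF : F.Superlinear) (a N : ℝ) :
    ∃ s ≥ N, F.F s ≠ ∞ → a * s ≤ (F.F s).toReal := by
  have hlim : ENNReal.ofReal a < limsup (fun s : ℝ => F.F s / ENNReal.ofReal s) atTop :=
    lt_of_lt_of_eq ENNReal.ofReal_lt_top (Eq.symm hF)
  obtain ⟨s, hs, hsN⟩ := ((frequently_lt_of_lt_limsup (by isBoundedDefault) hlim).and_eventually
    (eventually_ge_atTop (max N 1))).exists
  have hs0 : 0 < s := zero_lt_one.trans_le ((le_max_right _ _).trans hsN)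
  refine ⟨s, (le_max_left _ _).trans hsN, fun hfin => ?_⟩
  rw [ENNReal.lt_div_iff_mul_lt (.inl (ENNReal.ofReal_pos.2 hs0).ne') (.inl ENNReal.ofReal_ne_top),
    ← ENNReal.ofReal_mul' hs0.le] at hs
  exact (ENNReal.ofReal_le_iff_le_toReal hfin).1 hs.le

lemma Superlinear.exists_mul_sub_le (hF : F.Superlinear) (a : ℝ) :
    ∃ b, ∀ s, 0 ≤ s → F.F s ≠ ∞ → a * s - b ≤ (F.F s).toReal := by
  obtain ⟨s₀, hs₀, hFs₀⟩ := F.dom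
  obtain ⟨s₁, hs₁, hFs₁⟩ := hF.exists_ge_mul_le (|a| + 1) (max (s₀ + 1) (F.F s₀).toReal)
  obtain ⟨hs₀₁, hFs₀₁⟩ := max_le_iff.1 hs₁
  have hs₁_pos : 0 < s₁ := by linarith
  refine ⟨|a| * s₁, fun s hs hFs => ?_⟩
  have has : a * s ≤ |a| * s := mul_le_mul_of_nonneg_right (le_abs_self a) hs
  rcases le_or_gt s s₁ with hle | hlt
  · have := mul_le_mul_of_nonneg_left hle (abs_nonneg a)
    linarith [(F.F s).toReal_nonneg]
  -- `s₁` is the convex combination of `s` and `s₀` with weight `t ≤ s₁ / s`.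
  have hd : 0 < s - s₀ := by linarith
  set t := (s₁ - s₀) / (s - s₀) with ht
  have ht0 : 0 ≤ t := div_nonneg (by linarith) hd.le
  have ht1 : t ≤ 1 := (div_le_one hd).2 (by linarith)
  have hts : t * s ≤ s₁ := by
    have : t * (s - s₀) = s₁ - s₀ := div_mul_cancel₀ _ hd.ne'
    nlinarith
  have hcomb : t * s + (1 - t) * s₀ = s₁ := by rw [ht]; field_simp; ring
  obtain ⟨hfin, hconv⟩ := toReal_convex hs hs₀.le ht0 ht1 hFs hFs₀
  rw [hcomb] at hfin hconv
  have hFt : (1 - t) * (F.F s₀).toReal ≤ s₁ := by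
    nlinarith [mul_nonneg ht0 (F.F s₀).toReal_nonneg]
  have hslope : |a| * s₁ ≤ t * (F.F s).toReal := by linarith [hFs₁ hfin]
  have hkey : s₁ * (|a| * s) ≤ s₁ * (F.F s).toReal :=
    calc s₁ * (|a| * s) = (|a| * s₁) * s := by ring
      _ ≤ t * (F.F s).toReal * s := by gcongr
      _ = t * s * (F.F s).toReal := by ring
      _ ≤ s₁ * (F.F s).toReal := by gcongr
  have := le_of_mul_le_mul_left hkey hs₁_pos
  linarith [mul_nonneg (abs_nonneg a) hs₁_pos.le]

/-- The function `F°` with real values; for superlinear `F` nothing is lost by `toReal`, see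
`EntropyFn.Superlinear.coe_circReal`. -/
def circReal (F : EntropyFn) (φ : ℝ) : ℝ := (F.circ φ).toReal

namespace Superlinear

lemma coe_circReal (hF : F.Superlinear) (φ : ℝ) : (F.circReal φ : EReal) = F.circ φ := by
  refine EReal.coe_toReal ?_ ?_
  · obtain ⟨s₀, hs₀, hFs₀⟩ := F.dom
    have hle := F.circ_le_mul_add φ hs₀.le
    rw [← EReal.coe_ennreal_toReal hFs₀] at hle
    exact ne_top_of_le_ne_top (by exact_mod_cast EReal.coe_ne_top _) hle
  · obtain ⟨b, hb⟩ := hF.exists_mul_sub_le (-φ)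
    refine ne_bot_of_le_ne_bot (EReal.coe_ne_bot (-b)) (le_circ_iff.2 fun s hs hFs => ?_)
    linarith [hb s hs hFs]

lemma le_circReal_iff (hF : F.Superlinear) {c φ : ℝ} :
    c ≤ F.circReal φ ↔ ∀ s, 0 ≤ s → F.F s ≠ ∞ → c ≤ φ * s + (F.F s).toReal := by
  rw [← le_circ_iff, ← hF.coe_circReal, EReal.coe_le_coe_iff]

lemma circReal_le_mul_add (hF : F.Superlinear) (φ : ℝ) {s : ℝ} (hs : 0 ≤ s) (hFs : F.F s ≠ ∞) :
    F.circReal φ ≤ φ * s + (F.F s).toReal :=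
  hF.le_circReal_iff.1 le_rfl s hs hFs

lemma circReal_mono (hF : F.Superlinear) : Monotone F.circReal := by
  intro a b hab
  rw [← EReal.coe_le_coe_iff, hF.coe_circReal, hF.coe_circReal]
  exact F.circ_mono (by exact_mod_cast hab)

lemma circReal_zero_nonneg (hF : F.Superlinear) : 0 ≤ F.circReal 0 :=
  hF.le_circReal_iff.2 fun s _ _ => by simp

lemma concaveOn_circReal (hF : F.Superlinear) : ConcaveOn ℝ univ F.circReal := by
  refine ⟨convex_univ, fun x _ y _ a b ha hb hab => hF.le_circReal_iff.2 fun s hs hFs => ?_⟩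
  calc a * F.circReal x + b * F.circReal y
      ≤ a * (x * s + (F.F s).toReal) + b * (y * s + (F.F s).toReal) := by
        gcongr <;> exact hF.circReal_le_mul_add _ hs hFs
    _ = (a * x + b * y) * s + (a + b) * (F.F s).toReal := by ring
    _ = (a • x + b • y) * s + (F.F s).toReal := by rw [hab, one_mul, smul_eq_mul, smul_eq_mul]

lemma continuous_circReal (hF : F.Superlinear) : Continuous F.circReal :=
  continuousOn_univ.1 (hF.concaveOn_circReal.continuousOn isOpen_univ)

lemma interior_circDom (hF : F.Superlinear) : interior F.circDom = univ := by
  rw [eq_univ_of_forall (s := F.circDom) fun φ => ?_, interior_univ]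
  change F.circ φ ≠ ⊥
  exact hF.coe_circReal φ ▸ EReal.coe_ne_bot _

theorem exists_lt_circReal_sub_mul (hF : F.Superlinear) {s t : ℝ} (hs : 0 ≤ s)
    (ht : ENNReal.ofReal t < F.F s) : ∃ φ : ℝ, t < F.circReal φ - φ * s := by
  have hconv (p q : Ici (0 : ℝ)) (a b : ℝ) (ha : 0 ≤ a) (hb : 0 ≤ b) (hab : a + b = 1) :
      ∃ r : Ici (0 : ℝ), (r : ℝ) = a • (p : ℝ) + b • (q : ℝ) ∧
        F.F r ≤ ENNReal.ofReal a * F.F p + ENNReal.ofReal b * F.F q := by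
    obtain rfl : b = 1 - a := by linarith
    exact ⟨⟨_, add_nonneg (mul_nonneg ha p.2) (mul_nonneg hb q.2)⟩, rfl,
      F.convex' p p.2 q q.2 a ha (by linarith)⟩
  obtain ⟨l, c, hl, hlt⟩ := exists_affine_minorant_lt (T := ((↑) : Ici (0 : ℝ) → ℝ))
    (g := fun r => F.F r) (m := ⟨s, hs⟩) hconv
    (fun u hu => by
      have hev := preimage_coe_mem_nhds_subtype (a := ⟨s, hs⟩).2 (F.lsc s hs u hu)
      rwa [nhds_subtype_eq_comap] at hev) ht
  have hl_mul (y : ℝ) : l y = y * l 1 := by rw [← smul_eq_mul, ← map_smul, smul_eq_mul, mul_one]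
  refine ⟨-(l 1), ?_⟩
  have hc : c ≤ F.circReal (-(l 1)) := by
    refine hF.le_circReal_iff.2 fun r hr hFr => ?_
    have hlr := (ENNReal.ofReal_le_iff_le_toReal hFr).1 (hl ⟨r, hr⟩)
    rw [hl_mul] at hlr
    linarith
  rw [hl_mul] at hlt
  linarith

lemma exists_lt_circReal (hF : F.Superlinear) {b : ℝ} (hb : (b : EReal) < F.F 0) :
    ∃ φ : ℝ, b < F.circReal φ := by
  rcases lt_or_ge b 0 with hneg | hpos
  · exact ⟨0, hneg.trans_le hF.circReal_zero_nonneg⟩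
  · have hb' : ENNReal.ofReal b < F.F 0 := by
      rwa [← EReal.coe_ennreal_lt_coe_ennreal_iff, EReal.coe_ennreal_ofReal, max_eq_left hpos]
    obtain ⟨φ, hφ⟩ := hF.exists_lt_circReal_sub_mul le_rfl hb'
    exact ⟨φ, by simpa only [mul_zero, sub_zero] using hφ⟩

end Superlinear

lemma mul_sub_revF_le_iff {r : ℝ} (hr : 0 < r) {ψ φ : ℝ} :
    ((r * ψ : ℝ) : EReal) - F.revF r ≤ φ ↔
      (F.F r⁻¹ ≠ ∞ → ψ ≤ φ * r⁻¹ + (F.F r⁻¹).toReal) := by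
  rw [revF, if_pos hr, one_div]
  by_cases hFr : F.F r⁻¹ = ∞
  · simp [hFr, ENNReal.mul_top (ENNReal.ofReal_pos.2 hr).ne']
  · have hmul : r * (φ * r⁻¹ + (F.F r⁻¹).toReal) = φ + r * (F.F r⁻¹).toReal := by field_simp
    rw [← EReal.coe_ennreal_toReal (ENNReal.mul_ne_top ENNReal.ofReal_ne_top hFr),
      ENNReal.toReal_mul, ENNReal.toReal_ofReal hr.le, ← EReal.coe_sub, EReal.coe_le_coe_iff,
      sub_le_iff_le_add, forall_prop_of_true hFr, ← hmul, mul_le_mul_iff_right₀ hr]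

namespace Superlinear

theorem revConj_le_iff (hF : F.Superlinear) {ψ φ : ℝ} (hψ : (ψ : EReal) ≤ F.F 0) :
    F.revConj ψ ≤ φ ↔ ψ ≤ F.circReal φ := by
  rw [hF.le_circReal_iff, revConj, iSup_le_iff, Subtype.forall]
  constructor
  · intro h s hs hFs
    rcases hs.eq_or_lt with rfl | hpos
    · rw [← EReal.coe_ennreal_toReal hFs, EReal.coe_le_coe_iff] at hψ
      simpa using hψ
    · have h' := (mul_sub_revF_le_iff (inv_pos.2 hpos)).1 (h s⁻¹ (inv_nonneg.2 hs))
      rw [inv_inv] at h'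
      exact h' hFs
  · intro h s hs
    rcases (show 0 ≤ s from hs).eq_or_lt with rfl | hpos
    · have hrec : F.recC = ∞ := hF
      simp [revF, hrec]
    · exact (mul_sub_revF_le_iff hpos).2 (h s⁻¹ (inv_nonneg.2 hs))

lemma coe_toReal_revConj (hF : F.Superlinear) {ψ : ℝ} (hψ : (ψ : EReal) < F.F 0) :
    ((F.revConj ψ).toReal : EReal) = F.revConj ψ := by
  refine EReal.coe_toReal ?_ fun hbot => ?_
  · obtain ⟨φ, hφ⟩ := hF.exists_lt_circReal hψ
    exact ne_top_of_le_ne_top (EReal.coe_ne_top _) ((hF.revConj_le_iff hψ.le).2 hφ.le)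
  · obtain ⟨s₀, hs₀, hFs₀⟩ := F.dom
    set φ := (ψ - (F.F s₀).toReal - 1) / s₀ with hφ
    have hle := hF.circReal_le_mul_add φ hs₀.le hFs₀
    rw [hφ, div_mul_cancel₀ _ hs₀.ne', ← hφ] at hle
    linarith [(hF.revConj_le_iff (φ := φ) hψ.le).1 (hbot.trans_le bot_le)]

lemma continuousOn_toReal_revConj (hF : F.Superlinear) :
    ContinuousOn (fun ψ : ℝ => (F.revConj ψ).toReal) {ψ : ℝ | (ψ : EReal) < F.F 0} := by
  have hconv : Convex ℝ {ψ : ℝ | (ψ : EReal) < F.F 0} :=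
    convex_iff_ordConnected.2
      ⟨fun x _ y hy z hz => (EReal.coe_le_coe_iff.2 hz.2).trans_lt hy⟩
  refine ConvexOn.continuousOn (isOpen_Iio.preimage continuous_coe_real_ereal)
    ⟨hconv, fun x hx y hy a b ha hb hab => ?_⟩
  have hle {ψ : ℝ} (hψ : (ψ : EReal) < F.F 0) : ψ ≤ F.circReal (F.revConj ψ).toReal :=
    (hF.revConj_le_iff hψ.le).1 (hF.coe_toReal_revConj hψ).ge
  have hz := hconv hx hy ha hb hab
  rw [← EReal.coe_le_coe_iff, hF.coe_toReal_revConj hz, hF.revConj_le_iff (le_of_lt hz)]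
  refine le_trans ?_ (hF.concaveOn_circReal.2 (mem_univ _) (mem_univ _) ha hb hab)
  simp only [smul_eq_mul]
  gcongr
  exacts [hle hx, hle hy]

end Superlinear

end EntropyFn


section ProbabilityMeasureSpace

/-- The tautological Markov kernel `p ↦ p` from `𝒫(X)` to `X`, so that `evalKernel X ∘ₘ Q` is the
barycenter of a measure `Q` on `𝒫(X)`. -/
def evalKernel (X : Type*) [MeasurableSpace X] : Kernel (ProbabilityMeasure X) X :=
  ⟨fun p => (p : Measure X), measurable_subtype_coe⟩

lemma evalKernel_apply {X : Type*} [MeasurableSpace X] (p : ProbabilityMeasure X) :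
    evalKernel X p = (p : Measure X) := rfl

instance isMarkovKernel_evalKernel (X : Type*) [MeasurableSpace X] :
    IsMarkovKernel (evalKernel X) := ⟨fun p => p.2⟩

/-- The pushforward of probability measures along a measurable map `f`, as a function of the
measure. -/
def pushforward {X Y : Type*} [MeasurableSpace X] [MeasurableSpace Y] {f : X → Y}
    (hf : Measurable f) (p : ProbabilityMeasure X) : ProbabilityMeasure Y :=
  p.map hf.aemeasurable

lemma coe_pushforward {X Y : Type*} [MeasurableSpace X] [MeasurableSpace Y] {f : X → Y}
    (hf : Measurable f) (p : ProbabilityMeasure X) :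
    (pushforward hf p : Measure Y) = (p : Measure X).map f := rfl

lemma range_pushforward {X Y : Type*} [MeasurableSpace X] [MeasurableSpace Y] {f : X → Y}
    (hf : MeasurableEmbedding f) :
    range (pushforward hf.measurable) =
      {p : ProbabilityMeasure Y | (p : Measure Y) (range f)ᶜ = 0} := by
  ext p
  constructor
  · rintro ⟨q, rfl⟩
    simp [coe_pushforward, hf.map_apply]
  · intro hp
    have hmem : ∀ᵐ y ∂(p : Measure Y), y ∈ range f := hp
    have hmap : ((p : Measure Y).comap f).map f = p := by
      rw [hf.map_comap, Measure.restrict_eq_self_of_ae_mem hmem]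
    have huniv : IsProbabilityMeasure ((p : Measure Y).comap f) :=
      hf.isProbabilityMeasure_comap hmem
    exact ⟨⟨_, huniv⟩, Subtype.ext hmap⟩

variable {X : Type*} [TopologicalSpace X] [MeasurableSpace X] [BorelSpace X]
  {Y : Type*} [TopologicalSpace Y] [MeasurableSpace Y] [BorelSpace Y]

lemma injective_pushforward {f : X → Y} (hf : IsEmbedding f) :
    Function.Injective (pushforward hf.continuous.measurable) := by
  refine fun p q hpq => Subtype.ext (ext_of_generate_finite (μ := (p : Measure X)) {s | IsOpen s}
    BorelSpace.measurable_eq isPiSystem_isOpen (fun s hs => ?_) (by simp))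
  obtain ⟨V, hV, rfl⟩ := hf.isInducing.isOpen_iff.1 hs
  have hpqV := congrArg (fun r : ProbabilityMeasure Y => (r : Measure Y) V) hpq
  simp only [coe_pushforward, Measure.map_apply hf.continuous.measurable hV.measurableSet] at hpqV
  exact hpqV

lemma isInducing_integral_boundedContinuousFunction :
    IsInducing fun (p : ProbabilityMeasure X) (f : X →ᵇ ℝ) => ∫ x, f x ∂(p : Measure X) := by
  refine isInducing_iff_nhds.2 fun p => le_antisymm ?_ ?_
  · exact (tendsto_pi_nhds.2 fun f =>
      ProbabilityMeasure.tendsto_iff_forall_integral_tendsto.1 tendsto_id f).le_comap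
  · rw [← tendsto_id', ProbabilityMeasure.tendsto_iff_forall_integral_tendsto]
    exact fun f => ((continuous_apply (A := fun _ : X →ᵇ ℝ => ℝ) f).tendsto _).comp tendsto_comap

lemma topology_probabilityMeasure_eq_generateFrom :
    (inferInstance : TopologicalSpace (ProbabilityMeasure X)) =
      generateFrom (⋃ f : X →ᵇ ℝ,
        {s | IsOpen[induced (fun p : ProbabilityMeasure X => ∫ x, f x ∂(p : Measure X))
          inferInstance] s}) := by
  refine Eq.trans ?_ (generateFrom_iUnion_isOpen fun f : X →ᵇ ℝ =>
    induced (fun p : ProbabilityMeasure X => ∫ x, f x ∂(p : Measure X)) inferInstance).symm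
  refine isInducing_integral_boundedContinuousFunction.eq_induced.trans ?_
  simp only [Pi.topologicalSpace, induced_iInf, induced_compose]
  rfl

lemma isEmbedding_pushforward [HasOuterApproxClosed Y]
    [FirstCountableTopology (ProbabilityMeasure Y)] {f : X → Y} (hf : IsEmbedding f) :
    IsEmbedding (pushforward hf.continuous.measurable) := by
  refine ⟨isInducing_iff_nhds.2 fun p => le_antisymm ?_ ?_, injective_pushforward hf⟩
  · exact ((ProbabilityMeasure.continuous_map hf.continuous).tendsto p).le_comap
  · rw [← tendsto_id']
    refine tendsto_of_forall_isOpen_le_liminf' fun G hG => ?_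
    obtain ⟨V, hV, rfl⟩ := hf.isInducing.isOpen_iff.1 hG
    simpa [coe_pushforward, Measure.map_apply hf.continuous.measurable hV.measurableSet] using
      ProbabilityMeasure.le_liminf_measure_open_of_tendsto
        (tendsto_comap (f := pushforward hf.continuous.measurable)
          (x := 𝓝 (pushforward hf.continuous.measurable p))) hV

section HasOuterApproxClosed

variable [HasOuterApproxClosed X]

lemma lowerSemicontinuous_apply_of_isOpen {U : Set X} (hU : IsOpen U) :
    LowerSemicontinuous fun p : ProbabilityMeasure X => (p : Measure X) U := fun _ =>
  lowerSemicontinuousAt_iff_le_liminf.2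
    (ProbabilityMeasure.le_liminf_measure_open_of_tendsto tendsto_id hU)

lemma measurable_coe_borel_probabilityMeasure :
    Measurable[borel (ProbabilityMeasure X)] fun p : ProbabilityMeasure X => (p : Measure X) := by
  let _ : MeasurableSpace (ProbabilityMeasure X) := borel _
  have _ : BorelSpace (ProbabilityMeasure X) := ⟨rfl⟩
  exact Measurable.measure_of_isPiSystem_of_isProbabilityMeasure BorelSpace.measurable_eq
    isPiSystem_isOpen fun s hs => (lowerSemicontinuous_apply_of_isOpen hs).measurable

lemma borelSpace_probabilityMeasure [SecondCountableTopology (ProbabilityMeasure X)] :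
    BorelSpace (ProbabilityMeasure X) := by
  refine ⟨le_antisymm measurable_coe_borel_probabilityMeasure.comap_le ?_⟩
  rw [borel_eq_generateFrom_of_subbasis topology_probabilityMeasure_eq_generateFrom]
  refine MeasurableSpace.generateFrom_le fun s hs => ?_
  obtain ⟨f, U, hU, rfl⟩ := mem_iUnion.1 hs
  have hf : StronglyMeasurable fun p : ProbabilityMeasure X => ∫ x, f x ∂(p : Measure X) :=
    f.continuous.measurable.stronglyMeasurable.integral_kernel (κ := evalKernel X)
  exact hf.measurable hU.measurableSet

end HasOuterApproxClosed

end ProbabilityMeasureSpace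

section CompactMetrizable

variable (K : Type*) [TopologicalSpace K] [MetrizableSpace K] [CompactSpace K]

lemma secondCountableTopology_of_compact_metrizable : SecondCountableTopology K := by
  let _ := metrizableSpaceMetric K
  infer_instance

lemma polishSpace_of_compact_metrizable : PolishSpace K := by
  let _ := metrizableSpaceMetric K
  infer_instance

variable [MeasurableSpace K] [BorelSpace K]

instance metrizableSpace_probabilityMeasure_of_compact :
    MetrizableSpace (ProbabilityMeasure K) := by
  have _ := secondCountableTopology_of_compact_metrizable K
  infer_instance

end CompactMetrizable

lemma exists_isEmbedding_hilbertCube (X : Type*) [TopologicalSpace X] [MetrizableSpace X]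
    [SecondCountableTopology X] : ∃ i : X → ℕ → unitInterval, IsEmbedding i := by
  let _ := metrizableSpaceMetric X
  obtain ⟨f, hf⟩ := Metric.PiNatEmbed.exists_embedding_to_hilbert_cube (X := X)
  exact ⟨f, hf⟩

section StandardBorel

lemma standardBorelSpace_of_measurableEquiv {α β : Type*} [MeasurableSpace α] [MeasurableSpace β]
    [StandardBorelSpace β] (e : α ≃ᵐ β) : StandardBorelSpace α := by
  let _ := upgradeStandardBorel β
  let t : TopologicalSpace α := induced e inferInstance
  refine ⟨t, ⟨?_⟩, ?_⟩
  · rw [← e.measurableEmbedding.comap_eq]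
    exact (congrArg _ BorelSpace.measurable_eq).trans borel_comap.symm
  · exact (e.toEquiv.toHomeomorphOfIsInducing (.mk rfl)).isClosedEmbedding.polishSpace

variable {X : Type*} [TopologicalSpace X] [MeasurableSpace X] [BorelSpace X]

instance secondCountableTopology_probabilityMeasure [MetrizableSpace X]
    [SecondCountableTopology X] : SecondCountableTopology (ProbabilityMeasure X) := by
  obtain ⟨i, hi⟩ := exists_isEmbedding_hilbertCube X
  have _ := secondCountableTopology_of_compact_metrizable (ProbabilityMeasure (ℕ → unitInterval))
  exact (isEmbedding_pushforward hi).secondCountableTopology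

instance borelSpace_probabilityMeasure_of_metrizable [MetrizableSpace X]
    [SecondCountableTopology X] : BorelSpace (ProbabilityMeasure X) :=
  borelSpace_probabilityMeasure

lemma measurableEmbedding_pushforward [PolishSpace X] {Y : Type*} [TopologicalSpace Y]
    [MetrizableSpace Y] [SecondCountableTopology Y] [MeasurableSpace Y] [BorelSpace Y] {i : X → Y}
    (hi : IsEmbedding i) : MeasurableEmbedding (pushforward hi.continuous.measurable) := by
  have hm := hi.continuous.measurableEmbedding hi.injective
  refine (isEmbedding_pushforward hi).measurableEmbedding ?_
  rw [range_pushforward hm]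
  exact (evalKernel Y).measurable_coe hm.measurableSet_range.compl (measurableSet_singleton 0)

instance standardBorelSpace_probabilityMeasure [PolishSpace X] :
    StandardBorelSpace (ProbabilityMeasure X) := by
  obtain ⟨i, hi⟩ := exists_isEmbedding_hilbertCube X
  have _ := polishSpace_of_compact_metrizable (ProbabilityMeasure (ℕ → unitInterval))
  have hm := measurableEmbedding_pushforward hi
  have _ := hm.measurableSet_range.standardBorel
  exact standardBorelSpace_of_measurableEquiv hm.equivRange

end StandardBorel

section Barycenter

lemma ofReal_integral_le_lintegral_ofReal {α : Type*} [MeasurableSpace α] {μ : Measure α}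
    (f : α → ℝ) : ENNReal.ofReal (∫ x, f x ∂μ) ≤ ∫⁻ x, ENNReal.ofReal (f x) ∂μ := by
  by_cases hf : Integrable f μ
  · rw [integral_eq_lintegral_pos_part_sub_lintegral_neg_part hf]
    exact ENNReal.ofReal_le_of_le_toReal (sub_le_self _ ENNReal.toReal_nonneg)
  · simp [integral_undef hf]

section Bind

variable {α β : Type*} [MeasurableSpace α] [MeasurableSpace β] {Q : Measure α} {κ : Kernel α β}
  {f : β → ℝ}

lemma integral_kernel_bind (hf : Integrable f (κ ∘ₘ Q)) :
    ∫ x, f x ∂(κ ∘ₘ Q) = ∫ a, ∫ x, f x ∂(κ a) ∂Q := by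
  have h := Kernel.integral_comp (η := κ) (κ := Kernel.const Unit Q) (a := ()) (f := f)
  rw [Kernel.comp_apply, Kernel.const_apply] at h
  exact h hf

lemma integrable_integral_kernel_bind (hf : Integrable f (κ ∘ₘ Q)) :
    Integrable (fun a => ∫ x, f x ∂(κ a)) Q := by
  have h := Integrable.integral_comp (η := κ) (κ := Kernel.const Unit Q) (a := ()) (f := f)
  rw [Kernel.comp_apply, Kernel.const_apply] at h
  exact h hf

end Bind

/-- Convexity of a function on `𝒫(X)` along segments `t p + (1 - t) q`, which are formed in the
space of measures since `𝒫(X)` carries no linear structure. -/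
def ConvexOnProbabilityMeasure {X : Type*} [MeasurableSpace X]
    (g : ProbabilityMeasure X → ℝ≥0∞) : Prop :=
  ∀ (p q m : ProbabilityMeasure X) (t : ℝ), 0 ≤ t → t ≤ 1 →
    (m : Measure X) = ENNReal.ofReal t • (p : Measure X)
        + ENNReal.ofReal (1 - t) • (q : Measure X) →
    g m ≤ ENNReal.ofReal t * g p + ENNReal.ofReal (1 - t) * g q

variable {X : Type*} [MeasurableSpace X]

lemma exists_probabilityMeasure_convexCombination (p q : ProbabilityMeasure X) {a b : ℝ}
    (ha : 0 ≤ a) (hb : 0 ≤ b) (hab : a + b = 1) :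
    ∃ r : ProbabilityMeasure X, (r : Measure X) =
      ENNReal.ofReal a • (p : Measure X) + ENNReal.ofReal b • (q : Measure X) := by
  refine ⟨⟨_, ⟨?_⟩⟩, rfl⟩
  simp [← ENNReal.ofReal_add ha hb, hab]

variable [TopologicalSpace X]

lemma integral_convexCombination [OpensMeasurableSpace X] {p q : Measure X} [IsFiniteMeasure p]
    [IsFiniteMeasure q] {a b : ℝ} (ha : 0 ≤ a) (hb : 0 ≤ b) (f : X →ᵇ ℝ) :
    ∫ x, f x ∂(ENNReal.ofReal a • p + ENNReal.ofReal b • q) =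
      a * ∫ x, f x ∂p + b * ∫ x, f x ∂q := by
  rw [integral_add_measure ((f.integrable _).smul_measure ENNReal.ofReal_ne_top)
      ((f.integrable _).smul_measure ENNReal.ofReal_ne_top),
    integral_smul_measure, integral_smul_measure, ENNReal.toReal_ofReal ha,
    ENNReal.toReal_ofReal hb, smul_eq_mul, smul_eq_mul]

variable [BorelSpace X]

/-- Integration against `p`, as an element of the algebraic dual of `C_b(X)` with the topology of
pointwise convergence. This is a locally convex space into which `𝒫(X)` embeds affinely. -/
def integralDual (p : ProbabilityMeasure X) :
    WeakBilin (LinearMap.id : Module.Dual ℝ (X →ᵇ ℝ) →ₗ[ℝ] Module.Dual ℝ (X →ᵇ ℝ)) :=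
  { toFun f := ∫ x, f x ∂(p : Measure X)
    map_add' f g := integral_add (f.integrable _) (g.integrable _)
    map_smul' c f := integral_const_mul c f }

lemma integralDual_convexCombination {p q r : ProbabilityMeasure X} {a b : ℝ} (ha : 0 ≤ a)
    (hb : 0 ≤ b) (hr : (r : Measure X) =
      ENNReal.ofReal a • (p : Measure X) + ENNReal.ofReal b • (q : Measure X)) :
    integralDual r = a • integralDual p + b • integralDual q := by
  refine LinearMap.ext fun f => ?_
  change ∫ x, f x ∂(r : Measure X) = _
  rw [hr, integral_convexCombination ha hb]
  rfl

lemma comap_integralDual_nhds (p : ProbabilityMeasure X) :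
    comap integralDual (𝓝 (integralDual p)) = 𝓝 p := by
  have hind : IsInducing (integralDual (X := X)) :=
    (IsInducing.of_comp_iff (WeakBilin.isEmbedding (B := LinearMap.id) fun _ _ h => h).isInducing).1
      isInducing_integral_boundedContinuousFunction
  exact (hind.nhds_eq_comap p).symm

lemma exists_integral_eq_dual (l : WeakBilin
    (LinearMap.id : Module.Dual ℝ (X →ᵇ ℝ) →ₗ[ℝ] Module.Dual ℝ (X →ᵇ ℝ)) →L[ℝ] ℝ) :
    ∃ h : X →ᵇ ℝ, ∀ p : ProbabilityMeasure X, l (integralDual p) = ∫ x, h x ∂(p : Measure X) := by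
  obtain ⟨h, rfl⟩ := LinearMap.dualEmbedding_surjective _ l
  exact ⟨h, fun _ => rfl⟩

namespace ConvexOnProbabilityMeasure

variable {g : ProbabilityMeasure X → ℝ≥0∞}

lemma exists_integral_minorant_lt (hconv : ConvexOnProbabilityMeasure g)
    (hg : LowerSemicontinuous g) {m : ProbabilityMeasure X} {t : ℝ} (ht : ENNReal.ofReal t < g m) :
    ∃ (h : X →ᵇ ℝ) (c : ℝ), (∀ p : ProbabilityMeasure X,
      ENNReal.ofReal (∫ x, h x ∂(p : Measure X) + c) ≤ g p) ∧
      t < ∫ x, h x ∂(m : Measure X) + c := by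
  have hT : ∀ p q (a b : ℝ), 0 ≤ a → 0 ≤ b → a + b = 1 →
      ∃ r, integralDual r = a • integralDual p + b • integralDual q ∧
        g r ≤ ENNReal.ofReal a * g p + ENNReal.ofReal b * g q := fun p q a b ha hb hab => by
    obtain ⟨r, hr⟩ := exists_probabilityMeasure_convexCombination p q ha hb hab
    obtain rfl : b = 1 - a := by linarith
    exact ⟨r, integralDual_convexCombination ha hb hr, hconv p q r a ha (by linarith) hr⟩
  obtain ⟨l, c, hle, hlt⟩ := exists_affine_minorant_lt hT
    (fun u hu => (comap_integralDual_nhds m).symm ▸ hg m u hu) ht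
  obtain ⟨h, hh⟩ := exists_integral_eq_dual l
  exact ⟨h, c, fun p => hh p ▸ hle p, hh m ▸ hlt⟩

theorem le_lintegral_of_eq_barycenter (hconv : ConvexOnProbabilityMeasure g)
    (hg : LowerSemicontinuous g) {Q : Measure (ProbabilityMeasure X)} [IsProbabilityMeasure Q]
    {m : ProbabilityMeasure X} (hm : (m : Measure X) = evalKernel X ∘ₘ Q) :
    g m ≤ ∫⁻ p, g p ∂Q := by
  refine ENNReal.le_of_forall_nnreal_lt fun t ht => ?_
  obtain ⟨h, c, hle, hlt⟩ := hconv.exists_integral_minorant_lt hg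
    (ENNReal.ofReal_coe_nnreal.trans_lt ht)
  have hint : Integrable h (evalKernel X ∘ₘ Q) := hm ▸ h.integrable (m : Measure X)
  have hint' : Integrable (fun p => ∫ x, h x ∂(evalKernel X p)) Q :=
    integrable_integral_kernel_bind hint
  have hbary : ∫ x, h x ∂(m : Measure X) + c = ∫ p, (∫ x, h x ∂(evalKernel X p) + c) ∂Q := by
    rw [hm, integral_kernel_bind hint, integral_add hint' (integrable_const _)]
    simp
  calc (t : ℝ≥0∞) = ENNReal.ofReal t := ENNReal.ofReal_coe_nnreal.symm
    _ ≤ ENNReal.ofReal (∫ p, (∫ x, h x ∂(evalKernel X p) + c) ∂Q) :=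
        ENNReal.ofReal_le_ofReal (hbary ▸ hlt.le)
    _ ≤ ∫⁻ p, ENNReal.ofReal (∫ x, h x ∂(evalKernel X p) + c) ∂Q :=
        ofReal_integral_le_lintegral_ofReal _
    _ ≤ ∫⁻ p, g p ∂Q := lintegral_mono hle

end ConvexOnProbabilityMeasure

end Barycenter

section EntropyDual

lemma exists_measurable_eq_partialSups {α : Type*} [MeasurableSpace α] {f : ℕ → α → ℝ}
    (hf : ∀ k, Measurable (f k)) (n : ℕ) :
    ∃ κ : α → ℕ, Measurable κ ∧ (∀ x, κ x ≤ n) ∧ ∀ x, f (κ x) x = partialSups f n x := by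
  induction n with
  | zero => exact ⟨fun _ => 0, measurable_const, fun _ => le_rfl, fun _ => by simp⟩
  | succ n ih =>
    obtain ⟨κ, hκ, hκn, hmax⟩ := ih
    have hsup : Measurable (partialSups f n) := by
      rw [partialSups_apply]
      exact Finset.measurable_sup' _ fun k _ => hf k
    refine ⟨fun x => if partialSups f n x < f (n + 1) x then n + 1 else κ x,
      Measurable.ite (measurableSet_lt hsup (hf _)) measurable_const hκ, fun x => ?_, fun x => ?_⟩
    · dsimp only
      split_ifs
      exacts [le_rfl, (hκn x).trans n.le_succ]
    · rw [partialSups_add_one, Pi.sup_apply]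
      dsimp only
      split_ifs with h
      · exact (sup_eq_right.2 h.le).symm
      · rw [hmax, sup_eq_left.2 (not_lt.1 h)]

section Approximation

variable {X : Type*} [TopologicalSpace X] [MetrizableSpace X] [MeasurableSpace X] [BorelSpace X]
  {φ : X → ℝ} {M : ℝ}

lemma exists_seq_boundedContinuousFunction_tendsto_ae (ρ : Measure X) [IsFiniteMeasure ρ]
    (hφ : Measurable φ) (hM : 0 ≤ M) (hφM : ∀ x, φ x ∈ Icc (-M) M) :
    ∃ c : ℕ → X →ᵇ ℝ, (∀ n x, c n x ∈ Icc (-M) M) ∧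
      ∀ᵐ x ∂ρ, Tendsto (fun n => c n x) atTop (𝓝 (φ x)) := by
  let _ := metrizableSpaceMetric X
  have hLp : MemLp φ 1 ρ := memLp_one_iff_integrable.2 <|
    .of_bound hφ.aestronglyMeasurable M (ae_of_all _ fun x => abs_le.2 (hφM x))
  choose g hg _ using fun n : ℕ => hLp.exists_boundedContinuous_eLpNorm_sub_le ENNReal.one_ne_top
    (ε := ((n : ℝ≥0∞) + 1)⁻¹) (by simp)
  have hlim : TendstoInMeasure ρ (fun n => g n) atTop φ := by
    refine tendstoInMeasure_of_tendsto_eLpNorm one_ne_zero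
      (fun n => (g n).continuous.aestronglyMeasurable) hφ.aestronglyMeasurable ?_
    refine tendsto_of_tendsto_of_tendsto_of_le_of_le tendsto_const_nhds
      (ENNReal.tendsto_inv_nat_nhds_zero.comp (tendsto_add_atTop_nat 1)) (fun _ => zero_le)
      fun n => ?_
    simpa [eLpNorm_sub_comm] using hg n
  obtain ⟨ns, -, hns⟩ := hlim.exists_seq_tendsto_ae
  have hMM : -M ≤ M := by linarith
  let clamp (y : ℝ) : ℝ := projIcc (-M) M hMM y
  have hclamp : Continuous clamp := continuous_subtype_val.comp continuous_projIcc
  refine ⟨fun n => .ofNormedAddCommGroup (fun x => clamp (g (ns n) x))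
    (hclamp.comp (g (ns n)).continuous) M fun x => abs_le.2 (projIcc _ _ hMM _).2,
    fun n x => (projIcc _ _ hMM _).2, ?_⟩
  filter_upwards [hns] with x hx
  have hφx : clamp (φ x) = φ x := congrArg Subtype.val (projIcc_of_mem hMM (hφM x))
  rw [← hφx]
  exact (hclamp.tendsto _).comp hx

end Approximation

namespace EntropyFn

lemma Superlinear.le_iSup_partialSups {F : EntropyFn} (hF : F.Superlinear) {q : ℕ → ℝ}
    (hq : DenseRange q) {X : Type*} {g : X → ℝ} {x : X} (hg : 0 ≤ g x) :
    F.F (g x) ≤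
      ⨆ n, ENNReal.ofReal (partialSups (fun k x => F.circReal (q k) - q k * g x) n x) := by
  refine ENNReal.le_of_forall_nnreal_lt fun t ht => ?_
  rw [← ENNReal.ofReal_coe_nnreal] at ht ⊢
  obtain ⟨n, hn⟩ := hq.exists_mem_open (isOpen_lt continuous_const
    (hF.continuous_circReal.sub (continuous_id.mul continuous_const)))
    (hF.exists_lt_circReal_sub_mul hg ht)
  refine le_iSup_of_le n (ENNReal.ofReal_le_ofReal ((le_of_lt hn).trans ?_))
  exact le_partialSups (fun k x => F.circReal (q k) - q k * g x) n x

variable {F : EntropyFn} {X : Type*} [MeasurableSpace X] {μ ν : Measure X}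

lemma entF_of_absolutelyContinuous (h : ν ≪ μ) :
    entF F ν μ = ∫⁻ x, F.F (ν.rnDeriv μ x).toReal ∂μ := by
  rw [entF, Measure.singularPart_eq_zero_of_ac h]
  simp

namespace Superlinear

lemma absolutelyContinuous_of_entF_ne_top [SigmaFinite μ] [SigmaFinite ν] (hF : F.Superlinear)
    (h : entF F ν μ ≠ ∞) : ν ≪ μ := by
  have hrec : F.recC = ∞ := hF
  have hsing : ν.singularPart μ univ = 0 := by
    by_contra hne
    exact h (by rw [entF, hrec, ENNReal.top_mul hne, add_top])
  rw [← Measure.singularPart_add_rnDeriv ν μ, Measure.measure_univ_eq_zero.1 hsing, zero_add]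
  exact withDensity_absolutelyContinuous _ _

variable [IsFiniteMeasure μ]

lemma norm_circReal_le (hF : F.Superlinear) {y M : ℝ} (hy : y ∈ Icc (-M) M) :
    ‖F.circReal y‖ ≤ max (F.circReal M) (-F.circReal (-M)) :=
  abs_le'.2 ⟨(hF.circReal_mono hy.2).trans (le_max_left _ _),
    (neg_le_neg (hF.circReal_mono hy.1)).trans (le_max_right _ _)⟩

lemma integrable_circReal_comp (hF : F.Superlinear) {φ : X → ℝ} (hφ : Measurable φ) {M : ℝ}
    (hφM : ∀ x, φ x ∈ Icc (-M) M) : Integrable (fun x => F.circReal (φ x)) μ :=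
  .of_bound (hF.continuous_circReal.measurable.comp hφ).aestronglyMeasurable _
    (ae_of_all _ fun x => hF.norm_circReal_le (hφM x))

variable [IsFiniteMeasure ν] [TopologicalSpace X] [MetrizableSpace X] [BorelSpace X] {B : ℝ}

lemma integral_circReal_sub_le_of_measurable (hF : F.Superlinear)
    (hB : ∀ φ : X →ᵇ ℝ, ∫ x, F.circReal (φ x) ∂μ - ∫ x, φ x ∂ν ≤ B) {φ : X → ℝ}
    (hφ : Measurable φ) {M : ℝ} (hM : 0 ≤ M) (hφM : ∀ x, φ x ∈ Icc (-M) M) :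
    ∫ x, F.circReal (φ x) ∂μ - ∫ x, φ x ∂ν ≤ B := by
  obtain ⟨c, hc, hlim⟩ := exists_seq_boundedContinuousFunction_tendsto_ae (μ + ν) hφ hM hφM
  obtain ⟨hlimμ, hlimν⟩ := ae_add_measure_iff.1 hlim
  have hcont := hF.continuous_circReal
  have hμ : Tendsto (fun n => ∫ x, F.circReal (c n x) ∂μ) atTop (𝓝 (∫ x, F.circReal (φ x) ∂μ)) :=
    tendsto_integral_of_dominated_convergence _
      (fun n => (hcont.comp (c n).continuous).aestronglyMeasurable) (integrable_const _)
      (fun n => ae_of_all _ fun x => hF.norm_circReal_le (hc n x))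
      (hlimμ.mono fun x hx => (hcont.tendsto _).comp hx)
  have hν : Tendsto (fun n => ∫ x, c n x ∂ν) atTop (𝓝 (∫ x, φ x ∂ν)) :=
    tendsto_integral_of_dominated_convergence (fun _ => M)
      (fun n => (c n).continuous.aestronglyMeasurable) (integrable_const _)
      (fun n => ae_of_all _ fun x => abs_le.2 (hc n x)) hlimν
  exact le_of_tendsto' (hμ.sub hν) fun n => hB (c n)

lemma absolutelyContinuous_of_forall_integral_le (hF : F.Superlinear)
    (hB : ∀ φ : X →ᵇ ℝ, ∫ x, F.circReal (φ x) ∂μ - ∫ x, φ x ∂ν ≤ B) : ν ≪ μ := by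
  refine Measure.AbsolutelyContinuous.mk fun A hA hμA => ?_
  have hbound (n : ℕ) : n * ν.real A ≤ B := by
    have hn : (0 : ℝ) ≤ n := n.cast_nonneg
    have hle := hF.integral_circReal_sub_le_of_measurable hB
      (φ := A.indicator fun _ => -(n : ℝ)) (measurable_const.indicator hA) hn fun x => by
        by_cases hx : x ∈ A <;> simp [hx, hn]
    have hzero : ∫ x, F.circReal (A.indicator (fun _ => -(n : ℝ)) x) ∂μ =
        ∫ _, F.circReal 0 ∂μ := by
      refine integral_congr_ae ?_
      filter_upwards [measure_eq_zero_iff_ae_notMem.1 hμA] with x hx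
      rw [indicator_of_notMem hx]
    have hnonneg : 0 ≤ ∫ _, F.circReal 0 ∂μ := integral_nonneg fun _ => hF.circReal_zero_nonneg
    rw [hzero, integral_indicator_const _ hA, smul_eq_mul] at hle
    linarith
  by_contra hne
  have hpos : 0 < ν.real A := ENNReal.toReal_pos hne (measure_ne_top _ _)
  obtain ⟨n, hn⟩ := exists_nat_gt (B / ν.real A)
  exact absurd (hbound n) (not_le.2 ((div_lt_iff₀ hpos).1 hn))

lemma lintegral_partialSups_le (hF : F.Superlinear)
    (hB : ∀ φ : X →ᵇ ℝ, ∫ x, F.circReal (φ x) ∂μ - ∫ x, φ x ∂ν ≤ B) {q : ℕ → ℝ} (hq : q 0 = 0)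
    (n : ℕ) : ∫⁻ x, ENNReal.ofReal (partialSups
      (fun k x => F.circReal (q k) - q k * (ν.rnDeriv μ x).toReal) n x) ∂μ ≤ ENNReal.ofReal B := by
  have hac := hF.absolutelyContinuous_of_forall_integral_le hB
  let f (k : ℕ) (x : X) : ℝ := F.circReal (q k) - q k * (ν.rnDeriv μ x).toReal
  have hf (k : ℕ) : Measurable (f k) :=
    measurable_const.sub ((Measure.measurable_rnDeriv ν μ).ennreal_toReal.const_mul _)
  have hnonneg (x : X) : 0 ≤ partialSups f n x := calc
    0 ≤ F.circReal 0 := hF.circReal_zero_nonneg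
    _ = f 0 x := by simp [f, hq]
    _ ≤ partialSups f n x := le_partialSups_of_le f n.zero_le x
  obtain ⟨κ, hκ, hκn, hmax⟩ := exists_measurable_eq_partialSups hf n
  obtain ⟨M, hM⟩ : ∃ M : ℝ, ∀ k ≤ n, |q k| ≤ M :=
    ⟨partialSups (fun k => |q k|) n, fun k hk => le_partialSups_of_le (fun k => |q k|) hk⟩
  have hφ : Measurable fun x => q (κ x) := measurable_from_nat.comp hκ
  have hφM (x : X) : q (κ x) ∈ Icc (-M) M := abs_le.1 (hM _ (hκn x))
  have hint₁ := hF.integrable_circReal_comp (μ := μ) hφ hφM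
  have hint₂ : Integrable (fun x => q (κ x) * (ν.rnDeriv μ x).toReal) μ :=
    Measure.integrable_toReal_rnDeriv.bdd_mul hφ.aestronglyMeasurable
      (ae_of_all _ fun x => abs_le.2 (hφM x))
  have hν : ∫ x, q (κ x) * (ν.rnDeriv μ x).toReal ∂μ = ∫ x, q (κ x) ∂ν := by
    rw [← integral_rnDeriv_smul hac]
    simp only [smul_eq_mul, mul_comm]
  have hint : Integrable (partialSups f n) μ := (hint₁.sub hint₂).congr (ae_of_all _ hmax)
  rw [← ofReal_integral_eq_lintegral_ofReal hint (ae_of_all _ hnonneg),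
    ← integral_congr_ae (ae_of_all _ hmax), integral_sub hint₁ hint₂, hν]
  exact ENNReal.ofReal_le_ofReal (hF.integral_circReal_sub_le_of_measurable hB hφ
    ((abs_nonneg _).trans (hM 0 n.zero_le)) hφM)

theorem entF_le_of_forall_integral_le (hF : F.Superlinear)
    (hB : ∀ φ : X →ᵇ ℝ, ∫ x, F.circReal (φ x) ∂μ - ∫ x, φ x ∂ν ≤ B) : (entF F ν μ : EReal) ≤ B := by
  have hB₀ : 0 ≤ B := calc
    0 ≤ ∫ _, F.circReal 0 ∂μ := integral_nonneg fun _ => hF.circReal_zero_nonneg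
    _ ≤ B := by simpa using hB 0
  suffices h : entF F ν μ ≤ ENNReal.ofReal B by
    calc (entF F ν μ : EReal) ≤ (ENNReal.ofReal B : ℝ≥0∞) := by exact_mod_cast h
      _ = B := by rw [EReal.coe_ennreal_ofReal, max_eq_left hB₀]
  let q (k : ℕ) : ℝ := denseSeq ℝ k - denseSeq ℝ 0
  have hq : DenseRange q :=
    (Homeomorph.subRight (denseSeq ℝ 0)).surjective.denseRange.comp (denseRange_denseSeq ℝ)
      (Homeomorph.subRight _).continuous
  let f (k : ℕ) (x : X) : ℝ := F.circReal (q k) - q k * (ν.rnDeriv μ x).toReal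
  have hf (k : ℕ) : Measurable (f k) :=
    measurable_const.sub ((Measure.measurable_rnDeriv ν μ).ennreal_toReal.const_mul _)
  have hsup (n : ℕ) : Measurable (partialSups f n) := by
    rw [partialSups_apply]
    exact Finset.measurable_sup' _ fun k _ => hf k
  calc entF F ν μ = ∫⁻ x, F.F (ν.rnDeriv μ x).toReal ∂μ :=
        entF_of_absolutelyContinuous (hF.absolutelyContinuous_of_forall_integral_le hB)
    _ ≤ ∫⁻ x, ⨆ n, ENNReal.ofReal (partialSups f n x) ∂μ :=
        lintegral_mono fun x => hF.le_iSup_partialSups hq ENNReal.toReal_nonneg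
    _ = ⨆ n, ∫⁻ x, ENNReal.ofReal (partialSups f n x) ∂μ :=
        lintegral_iSup (fun n => (hsup n).ennreal_ofReal) fun m n hmn x =>
          ENNReal.ofReal_le_ofReal ((partialSups f).monotone hmn x)
    _ ≤ ENNReal.ofReal B :=
        iSup_le fun n => hF.lintegral_partialSups_le hB (q := q) (sub_self _) n

end Superlinear

end EntropyFn

end EntropyDual

section Multiplier

lemma le_of_forall_pos_le_add_mul {a b c : ℝ} (h : ∀ ε > 0, a ≤ b + ε * c) : a ≤ b := by
  have hlim : Tendsto (fun ε => b + ε * c) (𝓝[>] 0) (𝓝 b) :=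
    (Continuous.tendsto' (by fun_prop) 0 b (by simp)).mono_left nhdsWithin_le_nhds
  exact ge_of_tendsto hlim (eventually_mem_nhdsWithin.mono h)

section Lagrange

variable {V E : Type*} [AddCommGroup V] [Module ℝ V] [AddCommGroup E] [Module ℝ E]
  {S : V →ₗ[ℝ] E} {N : ConvexCone ℝ E} {s : Set V} {G : V → ℝ}

/-- The strict hypograph of the perturbation function `e ↦ sup {G v | v ∈ s, S v - e ∈ N}` of the
problem of maximising `G` on `s` subject to `S v ∈ N`. -/
def perturbationHypograph (S : V →ₗ[ℝ] E) (N : ConvexCone ℝ E) (s : Set V) (G : V → ℝ) :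
    Set (E × ℝ) :=
  {z | ∃ v ∈ s, S v - z.1 ∈ N ∧ z.2 < G v}

lemma convex_perturbationHypograph (hG : ConcaveOn ℝ s G) :
    Convex ℝ (perturbationHypograph S N s G) := by
  refine convex_iff_forall_pos.2 ?_
  rintro ⟨e, t⟩ ⟨v, hv, hev, htv⟩ ⟨e', t'⟩ ⟨v', hv', hev', htv'⟩ a b ha hb hab
  refine ⟨a • v + b • v', hG.1 hv hv' ha.le hb.le hab, ?_, ?_⟩
  · convert N.add_mem (N.smul_mem ha hev) (N.smul_mem hb hev') using 1
    simp only [map_add, map_smul, Prod.fst_add, Prod.smul_fst, smul_sub]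
    abel
  · exact (add_lt_add (mul_lt_mul_of_pos_left htv ha) (mul_lt_mul_of_pos_left htv' hb)).trans_le
      (hG.2 hv hv' ha.le hb.le hab)

variable [TopologicalSpace E] [IsTopologicalAddGroup E]

lemma isOpen_perturbationHypograph (hN : IsOpen (N : Set E)) :
    IsOpen (perturbationHypograph S N s G) := by
  have : perturbationHypograph S N s G =
      ⋃ v ∈ s, ((fun e => S v - e) ⁻¹' N) ×ˢ Iio (G v) := by
    ext z
    simp [perturbationHypograph, and_left_comm]
  exact this ▸ isOpen_biUnion fun v _ =>
    (hN.preimage (continuous_const.sub continuous_id)).prod isOpen_Iio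

variable [ContinuousSMul ℝ E]

lemma exists_hyperplane_perturbationHypograph (hN : IsOpen (N : Set E)) (hG : ConcaveOn ℝ s G)
    {D : ℝ} (hD : ∀ v ∈ s, S v ∈ N → G v ≤ D) :
    ∃ (l : E →L[ℝ] ℝ) (α : ℝ), ∀ v ∈ s, ∀ e, S v - e ∈ N → ∀ t < G v, l e + t * α < D * α := by
  have hA : ((0 : E), D) ∉ perturbationHypograph S N s G := by
    rintro ⟨v, hv, hSv, hGv⟩
    exact absurd (hD v hv (by simpa using hSv)) (not_le.2 hGv)
  obtain ⟨L, hL⟩ := geometric_hahn_banach_open_point (convex_perturbationHypograph hG)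
    (isOpen_perturbationHypograph hN) hA
  refine ⟨L.comp (.inl ℝ E ℝ), L (0, 1), fun v hv e he t ht => ?_⟩
  have hlt := hL (e, t) ⟨v, hv, he, ht⟩
  rw [map_prodMk_eq_add_mul L e t, map_prodMk_eq_add_mul L 0 D, map_zero, zero_add] at hlt
  rwa [mul_comm t, mul_comm D]

theorem exists_multiplier (hN : IsOpen (N : Set E)) (hG : ConcaveOn ℝ s G) {D : ℝ}
    (hD : ∀ v ∈ s, S v ∈ N → G v ≤ D) {v₀ : V} (hv₀ : v₀ ∈ s) (hSv₀ : S v₀ ∈ N) :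
    ∃ l : E →L[ℝ] ℝ, (∀ e ∈ N, l e ≤ 0) ∧ ∀ v ∈ s, G v ≤ D + l (S v) := by
  obtain ⟨l, α, hlt⟩ := exists_hyperplane_perturbationHypograph hN hG hD
  have hα : 0 < α := by
    have h := hlt v₀ hv₀ 0 (by simpa using hSv₀) _ (sub_one_lt (G v₀))
    have h₀ := hD v₀ hv₀ hSv₀
    rw [map_zero, zero_add] at h
    exact pos_of_mul_pos_right (a := D - (G v₀ - 1)) (by linarith) (by linarith)
  have hcone (e : E) (he : e ∈ N) : 0 ≤ l e := by
    refine le_of_forall_pos_le_add_mul (c := (D - (G v₀ - 1)) * α) fun ε hε => ?_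
    have h := hlt v₀ hv₀ (-(ε⁻¹ • e)) (by
      simpa using N.add_mem hSv₀ (N.smul_mem (inv_pos.2 hε) he)) _ (sub_one_lt (G v₀))
    rw [map_neg, map_smul, smul_eq_mul, ← mul_lt_mul_iff_right₀ hε] at h
    have : ε * (ε⁻¹ * l e) = l e := mul_inv_cancel_left₀ hε.ne' _
    linarith
  have hgraph (v : V) (hv : v ∈ s) : l (S v) + G v * α ≤ D * α := by
    refine le_of_forall_pos_le_add_mul (c := l (S v₀) + α) fun ε hε => ?_
    have h := hlt v hv (S v - ε • S v₀) (by simpa using N.smul_mem hε hSv₀) _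
      (sub_lt_self (G v) hε)
    rw [map_sub, map_smul, smul_eq_mul] at h
    linarith
  refine ⟨-(α⁻¹ • l), fun e he => ?_, fun v hv => ?_⟩
  · simpa using mul_nonneg (inv_nonneg.2 hα.le) (hcone e he)
  · have h := hgraph v hv
    have : D + (-(α⁻¹ • l)) (S v) = (D * α - l (S v)) / α := by
      rw [neg_apply, smul_apply, smul_eq_mul]
      field_simp
      ring
    rw [this, le_div_iff₀ hα]
    linarith

end Lagrange

section Riesz

variable {W : Type*} [TopologicalSpace W] [CompactSpace W] [T2Space W] [MeasurableSpace W]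
  [BorelSpace W]

open scoped CompactlySupported in
lemma exists_measure_integral_eq (l : C(W, ℝ) →ₚ[ℝ] ℝ) :
    ∃ P : Measure W, IsFiniteMeasure P ∧ ∀ f : C(W, ℝ), ∫ w, f w ∂P = l f := by
  let Λ : C_c(W, ℝ) →ₚ[ℝ] ℝ := .mk₀
    { toFun f := l f.toContinuousMap
      map_add' f g := map_add l f.toContinuousMap g.toContinuousMap
      map_smul' c f := map_smul l c f.toContinuousMap }
    fun f hf => map_nonneg l (a := f.toContinuousMap) hf
  exact ⟨RealRMK.rieszMeasure Λ, inferInstance, fun f =>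
    RealRMK.integral_rieszMeasure Λ (CompactlySupportedContinuousMap.continuousMapEquiv f)⟩

variable (W) in
/-- The open convex cone of strictly negative continuous functions on a compact space. -/
def negativeCone : ConvexCone ℝ C(W, ℝ) where
  carrier := {f | ∀ w, f w < 0}
  smul_mem' _ hc _ hf w := mul_neg_of_pos_of_neg hc (hf w)
  add_mem' _ hf _ hg w := add_neg (hf w) (hg w)

theorem exists_multiplier_measure {V : Type*} [AddCommGroup V] [Module ℝ V]
    {S : V →ₗ[ℝ] C(W, ℝ)} {s : Set V} {G : V → ℝ} (hG : ConcaveOn ℝ s G) {D : ℝ}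
    (hD : ∀ v ∈ s, (∀ w, S v w < 0) → G v ≤ D) {v₀ : V} (hv₀ : v₀ ∈ s)
    (hSv₀ : ∀ w, S v₀ w < 0) :
    ∃ P : Measure W, IsFiniteMeasure P ∧ ∀ v ∈ s, G v ≤ D + ∫ w, S v w ∂P := by
  have hopen : IsOpen (negativeCone W : Set C(W, ℝ)) := by
    convert ContinuousMap.isOpen_setOfPred_mapsTo (X := W) isCompact_univ
      (isOpen_Iio (a := (0 : ℝ)))
    simp [MapsTo, negativeCone]
  obtain ⟨l, hl, hlG⟩ := exists_multiplier (N := negativeCone W) hopen hG hD hv₀ hSv₀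
  have hpos (f : C(W, ℝ)) (hf : 0 ≤ f) : 0 ≤ l f := by
    refine le_of_forall_pos_le_add_mul (c := l 1) fun ε hε => ?_
    have h := hl (-f - ε • 1) fun w => by
      have : 0 ≤ f w := hf w
      simp only [ContinuousMap.sub_apply, ContinuousMap.neg_apply, ContinuousMap.smul_apply,
        ContinuousMap.one_apply, smul_eq_mul, mul_one]
      linarith
    rw [map_sub, map_neg, map_smul, smul_eq_mul] at h
    linarith
  obtain ⟨P, hP, hPl⟩ := exists_measure_integral_eq (.mk₀ (l : C(W, ℝ) →ₗ[ℝ] ℝ) hpos)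
  exact ⟨P, hP, fun v hv => (hlG v hv).trans_eq (congrArg (D + ·) (hPl (S v)).symm)⟩

end Riesz

end Multiplier

section LipschitzEnvelope

variable {W Z : Type*} [PseudoMetricSpace W] {i : Z → W} {c : Z → ℝ≥0∞}

/-- The largest `k`-Lipschitz function on `W` whose pullback along `i` is below `c`, truncated at
height `k`. For lower semicontinuous `c` and inducing `i` it increases to `c` along `i`. -/
def lipschitzEnvelope (i : Z → W) (c : Z → ℝ≥0∞) (k : ℕ) (w : W) : ℝ≥0∞ :=
  min k (⨅ z, c z + k * edist w (i z))

lemma lipschitzEnvelope_ne_top (k : ℕ) (w : W) : lipschitzEnvelope i c k w ≠ ∞ :=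
  ne_top_of_le_ne_top (ENNReal.natCast_ne_top k) (min_le_left _ _)

lemma lipschitzEnvelope_mono (w : W) : Monotone fun k => lipschitzEnvelope i c k w := by
  intro k n hkn
  have : (k : ℝ≥0∞) ≤ n := Nat.cast_le.2 hkn
  exact min_le_min this (iInf_mono fun z => by gcongr)

lemma lipschitzEnvelope_le_add (k : ℕ) (w w' : W) :
    lipschitzEnvelope i c k w ≤ lipschitzEnvelope i c k w' + k * edist w w' := by
  rw [lipschitzEnvelope, lipschitzEnvelope, min_add]
  refine le_min ((min_le_left _ _).trans le_self_add) ((min_le_right _ _).trans ?_)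
  rw [ENNReal.iInf_add]
  refine iInf_mono fun z => ?_
  rw [add_assoc, ← mul_add, add_comm (edist w' _)]
  gcongr
  exact edist_triangle _ _ _

lemma lipschitzWith_toReal_lipschitzEnvelope (k : ℕ) :
    LipschitzWith k fun w => (lipschitzEnvelope i c k w).toReal := by
  refine .of_le_add_mul _ fun w w' => ?_
  have hdist : (k : ℝ≥0∞) * edist w w' ≠ ∞ :=
    ENNReal.mul_ne_top (ENNReal.natCast_ne_top k) (edist_ne_top _ _)
  have h := ENNReal.toReal_mono (ENNReal.add_ne_top.2 ⟨lipschitzEnvelope_ne_top k w', hdist⟩)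
    (lipschitzEnvelope_le_add (i := i) (c := c) k w w')
  rwa [ENNReal.toReal_add (lipschitzEnvelope_ne_top k w') hdist, ENNReal.toReal_mul,
    ← dist_edist] at h

lemma iSup_lipschitzEnvelope [TopologicalSpace Z] (hi : IsInducing i)
    (hc : LowerSemicontinuous c) (z : Z) : ⨆ k, lipschitzEnvelope i c k (i z) = c z := by
  refine le_antisymm (iSup_le fun k => (min_le_right _ _).trans ((iInf_le _ z).trans (by simp)))
    (ENNReal.le_of_forall_nnreal_lt fun t ht => ?_)
  have hnhds : {z' | (t : ℝ≥0∞) < c z'} ∈ 𝓝 z := hc z _ ht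
  rw [hi.nhds_eq_comap, (Metric.nhds_basis_eball.comap i).mem_iff] at hnhds
  obtain ⟨δ, hδ, hδc⟩ := hnhds
  obtain ⟨n, hn⟩ := ENNReal.exists_nat_gt (ENNReal.coe_ne_top (r := t))
  obtain ⟨m, hm⟩ := ENNReal.exists_nat_mul_gt hδ.ne' (ENNReal.coe_ne_top (r := t))
  have htn : (t : ℝ≥0∞) ≤ (max n m : ℕ) := hn.le.trans (Nat.cast_le.2 (le_max_left _ _))
  refine le_iSup_of_le (max n m) (le_min htn (le_iInf fun z' => ?_))
  rcases lt_or_ge (edist (i z) (i z')) δ with hlt | hge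
  · have : (t : ℝ≥0∞) < c z' := hδc (by simpa [edist_comm] using hlt)
    exact this.le.trans le_self_add
  · refine (hm.le.trans ?_).trans le_add_self
    have : (m : ℝ≥0∞) ≤ (max n m : ℕ) := Nat.cast_le.2 (le_max_right _ _)
    gcongr

end LipschitzEnvelope

theorem exists_monotone_seq_continuousMap_iSup_eq {W Z : Type*} [TopologicalSpace W]
    [MetrizableSpace W] [TopologicalSpace Z] {i : Z → W} (hi : IsInducing i) {c : Z → ℝ≥0∞}
    (hc : LowerSemicontinuous c) :
    ∃ f : ℕ → C(W, ℝ), Monotone f ∧ (∀ k w, 0 ≤ f k w) ∧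
      ∀ z, ⨆ k, ENNReal.ofReal (f k (i z)) = c z := by
  let _ := metrizableSpaceMetric W
  refine ⟨fun k => ⟨_, (lipschitzWith_toReal_lipschitzEnvelope (i := i) (c := c) k).continuous⟩,
    fun k n hkn w => ENNReal.toReal_mono (lipschitzEnvelope_ne_top n w)
      (lipschitzEnvelope_mono w hkn), fun k w => ENNReal.toReal_nonneg, fun z => ?_⟩
  simp only [ContinuousMap.coe_mk, ENNReal.ofReal_toReal (lipschitzEnvelope_ne_top _ _)]
  exact iSup_lipschitzEnvelope hi hc z

section EIntegral

variable {α : Type*} [MeasurableSpace α] {μ : Measure α}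

lemma eIntegral_eq_lintegral_toENNReal_sub (f : α → EReal) :
    eIntegral μ f = (∫⁻ x, (f x).toENNReal ∂μ : ℝ≥0∞) - (∫⁻ x, (-f x).toENNReal ∂μ : ℝ≥0∞) :=
  rfl

lemma eIntegral_mono_ae {f g : α → EReal} (h : ∀ᵐ x ∂μ, f x ≤ g x) :
    eIntegral μ f ≤ eIntegral μ g := by
  simp only [eIntegral_eq_lintegral_toENNReal_sub]
  exact EReal.sub_le_sub
    (EReal.coe_ennreal_le_coe_ennreal_iff.2 <| lintegral_mono_ae <|
      h.mono fun _ hx => EReal.toENNReal_le_toENNReal hx)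
    (EReal.coe_ennreal_le_coe_ennreal_iff.2 <| lintegral_mono_ae <|
      h.mono fun _ hx => EReal.toENNReal_le_toENNReal (EReal.neg_le_neg_iff.2 hx))

lemma eIntegral_congr_ae {f g : α → EReal} (h : ∀ᵐ x ∂μ, f x = g x) :
    eIntegral μ f = eIntegral μ g :=
  (eIntegral_mono_ae (h.mono fun _ h => h.le)).antisymm
    (eIntegral_mono_ae (h.mono fun _ h => h.ge))

lemma eIntegral_coe {f : α → ℝ} (hf : Integrable f μ) :
    eIntegral μ (fun x => (f x : EReal)) = (∫ x, f x ∂μ : ℝ) := by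
  simp only [eIntegral_eq_lintegral_toENNReal_sub, ← EReal.coe_neg, EReal.toENNReal_of_ne_top,
    ne_eq, EReal.coe_ne_top, not_false_eq_true, EReal.toReal_coe]
  rw [integral_eq_lintegral_pos_part_sub_lintegral_neg_part hf, EReal.coe_sub,
    EReal.coe_ennreal_toReal hf.lintegral_lt_top.ne,
    EReal.coe_ennreal_toReal (by simpa using hf.neg.lintegral_lt_top.ne)]

lemma toENNReal_neg_coe_le_enorm (r : ℝ) : (-(r : EReal)).toENNReal ≤ ‖r‖ₑ := by
  rw [← EReal.coe_neg, EReal.toENNReal_of_ne_top (EReal.coe_ne_top _), EReal.toReal_coe,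
    Real.enorm_eq_ofReal_abs]
  exact ENNReal.ofReal_le_ofReal (neg_le_abs r)

lemma le_toENNReal_add_enorm (a : ℝ≥0∞) (r : ℝ) : a ≤ ((a : EReal) + r).toENNReal + ‖r‖ₑ :=
  calc a = ((a : EReal) + r + -r).toENNReal := by
        rw [add_assoc, ← sub_eq_add_neg, EReal.sub_self (EReal.coe_ne_top r) (EReal.coe_ne_bot r),
          add_zero, EReal.toENNReal_coe]
    _ ≤ ((a : EReal) + r).toENNReal + (-(r : EReal)).toENNReal := EReal.toENNReal_add_le
    _ ≤ ((a : EReal) + r).toENNReal + ‖r‖ₑ := by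
        gcongr
        exact toENNReal_neg_coe_le_enorm r

lemma toENNReal_neg_add_le_enorm (a : ℝ≥0∞) (r : ℝ) : (-((a : EReal) + r)).toENNReal ≤ ‖r‖ₑ :=
  (EReal.toENNReal_le_toENNReal <| EReal.neg_le_neg_iff.2 <|
    le_add_of_nonneg_left (EReal.coe_ennreal_nonneg a)).trans (toENNReal_neg_coe_le_enorm r)

lemma eIntegral_coe_add_coe_of_lintegral_eq_top {h : α → ℝ≥0∞} (hh : ∫⁻ x, h x ∂μ = ∞)
    {r : α → ℝ} (hr : Integrable r μ) : eIntegral μ (fun x => (h x : EReal) + r x) = ⊤ := by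
  have hpos : ∫⁻ x, ((h x : EReal) + r x).toENNReal ∂μ = ∞ := by
    by_contra hne
    have hle := lintegral_mono (μ := μ) fun x => le_toENNReal_add_enorm (h x) (r x)
    rw [lintegral_add_right' _ hr.1.enorm, hh] at hle
    exact ENNReal.add_ne_top.2 ⟨hne, hr.2.ne⟩ (top_le_iff.1 hle)
  have hneg : ∫⁻ x, (-((h x : EReal) + r x)).toENNReal ∂μ ≠ ∞ :=
    ((lintegral_mono fun x => toENNReal_neg_add_le_enorm (h x) (r x)).trans_lt hr.2).ne
  rw [eIntegral_eq_lintegral_toENNReal_sub, hpos, ← EReal.coe_ennreal_toReal hneg]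
  exact EReal.top_sub_coe _

lemma eIntegral_coe_add_coe {h : α → ℝ≥0∞} (hh : Measurable h) {r : α → ℝ}
    (hr : Integrable r μ) :
    eIntegral μ (fun x => (h x : EReal) + r x) = (∫⁻ x, h x ∂μ : ℝ≥0∞) + (∫ x, r x ∂μ : ℝ) := by
  by_cases hfin : ∫⁻ x, h x ∂μ = ∞
  · rw [eIntegral_coe_add_coe_of_lintegral_eq_top hfin hr, hfin]
    exact (EReal.top_add_coe _).symm
  have hfin' := ae_lt_top hh hfin
  have hint := integrable_toReal_of_lintegral_ne_top hh.aemeasurable hfin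
  calc eIntegral μ (fun x => (h x : EReal) + r x)
      = eIntegral μ (fun x => (((h x).toReal + r x : ℝ) : EReal)) :=
        eIntegral_congr_ae <| hfin'.mono fun x hx => by
          rw [EReal.coe_add, EReal.coe_ennreal_toReal hx.ne]
    _ = (∫ x, ((h x).toReal + r x) ∂μ : ℝ) := eIntegral_coe (hint.add hr)
    _ = (∫⁻ x, h x ∂μ : ℝ≥0∞) + (∫ x, r x ∂μ : ℝ) := by
        rw [integral_add hint hr, EReal.coe_add, integral_toReal hh.aemeasurable hfin',
          EReal.coe_ennreal_toReal hfin]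

end EIntegral

section ShiftedCost

/-- The cost `c + K`, with `c ≥ 0`. Every cost that is bounded below is of this form, and the
integral of `c` needs no sign convention. -/
def shiftedCost {α β : Type*} (c : α × β → ℝ≥0∞) (K : ℝ) (x : α) (p : β) : EReal :=
  c (x, p) + K

lemma continuous_toENNReal_sub_coe (K : ℝ) :
    Continuous fun a : EReal => (a - K).toENNReal := by
  refine EReal.continuous_toENNReal.comp (continuous_iff_continuousAt.2 fun a => ?_)
  have hadd := EReal.continuousAt_add (p := (a, -(K : EReal))) (by right; simp) (by right; simp)
  exact hadd.comp (f := fun a : EReal => (a, -(K : EReal))) (by fun_prop)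

lemma ereal_coe_mul_coe_add_coe {t : ℝ} (ht : 0 ≤ t) (a : ℝ≥0∞) (K : ℝ) :
    (t : EReal) * (a + K) = (ENNReal.ofReal t * a : ℝ≥0∞) + (t * K : ℝ) := by
  rw [EReal.left_distrib_of_nonneg_of_ne_top (by exact_mod_cast ht) (EReal.coe_ne_top t),
    EReal.coe_ennreal_mul, EReal.coe_ennreal_ofReal, max_eq_left ht, EReal.coe_mul]

lemma ereal_convexCombination_coe_add_coe {t : ℝ} (ht : 0 ≤ t) (ht' : t ≤ 1) (a b : ℝ≥0∞) (K : ℝ) :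
    (t : EReal) * (a + K) + ((1 - t : ℝ) : EReal) * (b + K) =
      (ENNReal.ofReal t * a + ENNReal.ofReal (1 - t) * b : ℝ≥0∞) + (K : EReal) := by
  rw [ereal_coe_mul_coe_add_coe ht, ereal_coe_mul_coe_add_coe (sub_nonneg.2 ht'),
    add_add_add_comm, ← EReal.coe_ennreal_add, ← EReal.coe_add]
  congr 3
  ring

lemma exists_eq_shiftedCost {X₁ X₂ : Type*} [TopologicalSpace X₁] [TopologicalSpace X₂]
    [MeasurableSpace X₂] [OpensMeasurableSpace X₂] (C : X₁ → ProbabilityMeasure X₂ → EReal)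
    (hClsc : LowerSemicontinuous fun q : X₁ × ProbabilityMeasure X₂ => C q.1 q.2) {K : ℝ}
    (hK : ∀ x p, (K : EReal) ≤ C x p)
    (hCconv : ∀ (x : X₁) (p q m : ProbabilityMeasure X₂) (t : ℝ), 0 ≤ t → t ≤ 1 →
      (m : Measure X₂) = ENNReal.ofReal t • (p : Measure X₂)
          + ENNReal.ofReal (1 - t) • (q : Measure X₂) →
      C x m ≤ (t : EReal) * C x p + ((1 - t : ℝ) : EReal) * C x q) :
    ∃ c : X₁ × ProbabilityMeasure X₂ → ℝ≥0∞, LowerSemicontinuous c ∧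
      (∀ x, ConvexOnProbabilityMeasure fun p => c (x, p)) ∧ C = shiftedCost c K := by
  let c (q : X₁ × ProbabilityMeasure X₂) : ℝ≥0∞ := (C q.1 q.2 - K).toENNReal
  have hc : C = shiftedCost c K := by
    ext x p
    rw [shiftedCost, EReal.coe_toENNReal ((EReal.sub_nonneg (by simp) (by simp)).2 (hK x p)),
      EReal.sub_add_cancel]
  refine ⟨c, (continuous_toENNReal_sub_coe K).comp_lowerSemicontinuous hClsc fun a b hab =>
    EReal.toENNReal_le_toENNReal (EReal.sub_le_sub hab le_rfl), fun x p q m t ht ht' hm => ?_, hc⟩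
  have hle := hCconv x p q m t ht ht' hm
  simp only [hc, shiftedCost] at hle
  rw [ereal_convexCombination_coe_add_coe ht ht'] at hle
  exact_mod_cast (EReal.addLECancellable_coe K).add_le_add_iff_right.1 hle

end ShiftedCost

section WeakDuality

namespace EntropyFn

variable {X : Type*} [MeasurableSpace X]

lemma measurable_comp_toReal (F : EntropyFn) {g : X → ℝ≥0∞} (hg : Measurable g) :
    Measurable fun x => F.F (g x).toReal := by
  have hlsc : LowerSemicontinuous fun s : ℝ => F.F (max s 0) := fun x y hy =>
    (tendsto_nhdsWithin_iff.2 ⟨(by fun_prop : Continuous fun s : ℝ => max s 0).tendsto x,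
      Eventually.of_forall fun s => le_max_right s 0⟩).eventually
        (F.lsc (max x 0) (le_max_right x 0) y hy)
  simpa [Function.comp_def] using hlsc.measurable.comp hg.ennreal_toReal

-- Young's inequality `F°(ψ) ≤ ψ s + F(s)` is applied with the density `s = dν/dμ`.
theorem Superlinear.eIntegral_circ_le {F : EntropyFn} (hF : F.Superlinear) {μ ν : Measure X}
    [IsFiniteMeasure μ] [IsFiniteMeasure ν] {ψ : X → EReal} {g : X → ℝ≥0∞} {r : X → ℝ}
    (hg : Measurable g) (hr : Integrable r ν) (hψ : ∀ x, ψ x ≤ g x + r x) :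
    eIntegral μ (fun x => F.circ (ψ x)) ≤
      entF F ν μ + ((∫⁻ x, g x ∂ν : ℝ≥0∞) + (∫ x, r x ∂ν : ℝ)) := by
  by_cases hfin : entF F ν μ = ∞
  · rw [hfin, EReal.coe_ennreal_top, EReal.top_add_of_ne_bot (by simp [EReal.add_eq_bot_iff])]
    exact le_top
  have hac := hF.absolutelyContinuous_of_entF_ne_top hfin
  let s : X → ℝ≥0∞ := ν.rnDeriv μ
  have hs : Measurable s := Measure.measurable_rnDeriv ν μ
  have hsg : Measurable fun x => s x * g x := hs.mul hg
  have hyoung : ∀ᵐ x ∂μ, F.circ (ψ x) ≤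
      ((s x * g x + F.F (s x).toReal : ℝ≥0∞) : EReal) + ((s x).toReal • r x : ℝ) := by
    filter_upwards [Measure.rnDeriv_lt_top ν μ] with x hx
    have hsx : (((s x).toReal : ℝ) : EReal) = s x := EReal.coe_ennreal_toReal hx.ne
    have hs₀ : (0 : EReal) ≤ s x := EReal.coe_ennreal_nonneg _
    calc F.circ (ψ x) ≤ ψ x * s x + F.F (s x).toReal := by
          rw [← hsx]
          exact F.circ_le_mul_add _ ENNReal.toReal_nonneg
      _ ≤ (g x + r x) * s x + F.F (s x).toReal := by gcongr; exact hψ x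
      _ = _ := by
          rw [EReal.right_distrib_of_nonneg_of_ne_top hs₀ (hsx ▸ EReal.coe_ne_top _), smul_eq_mul,
            EReal.coe_mul, hsx, EReal.coe_ennreal_add, EReal.coe_ennreal_mul,
            mul_comm (s x : EReal), mul_comm (s x : EReal), add_right_comm]
  calc eIntegral μ (fun x => F.circ (ψ x)) ≤ _ := eIntegral_mono_ae hyoung
    _ = (∫⁻ x, (s x * g x + F.F (s x).toReal) ∂μ : ℝ≥0∞) + (∫ x, (s x).toReal • r x ∂μ : ℝ) :=
        eIntegral_coe_add_coe (hsg.add (F.measurable_comp_toReal hs))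
          ((integrable_rnDeriv_smul_iff hac).2 hr)
    _ = _ := by
        rw [lintegral_add_left hsg, lintegral_rnDeriv_mul hac hg.aemeasurable,
          integral_rnDeriv_smul hac, ← entF_of_absolutelyContinuous hac, EReal.coe_ennreal_add,
          add_comm (_ : EReal) (entF F ν μ : EReal), add_assoc]

end EntropyFn

/-- The Markov kernel `κ`, as a map into the probability measures. -/
def markovLaw {α β : Type*} [MeasurableSpace α] [MeasurableSpace β] (κ : Kernel α β)
    [IsMarkovKernel κ] (x : α) : ProbabilityMeasure β :=
  ⟨κ x, inferInstance⟩

lemma measurable_markovLaw {α β : Type*} [MeasurableSpace α] [MeasurableSpace β] (κ : Kernel α β)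
    [IsMarkovKernel κ] : Measurable (markovLaw κ) :=
  κ.measurable.subtype_mk

lemma measurable_comp_markovLaw {α β : Type*} [MeasurableSpace α] [MeasurableSpace β]
    {c : α × ProbabilityMeasure β → ℝ≥0∞} (hc : Measurable c) (κ : Kernel α β)
    [IsMarkovKernel κ] : Measurable fun x => c (x, markovLaw κ x) :=
  hc.comp (measurable_id.prodMk (measurable_markovLaw κ))

variable {X₁ X₂ : Type*} [MeasurableSpace X₁] [MeasurableSpace X₂] [StandardBorelSpace X₂]
  [Nonempty X₂]

lemma condKernel_comp_fst (γ : Measure (X₁ × X₂)) [IsFiniteMeasure γ] :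
    γ.condKernel ∘ₘ γ.fst = γ.snd := by
  rw [← Measure.snd_compProd, γ.disintegrate]

variable {c : X₁ × ProbabilityMeasure X₂ → ℝ≥0∞} {F₁ F₂ : EntropyFn} {μ₁ : Measure X₁}
  {μ₂ : Measure X₂} (γ : Measure (X₁ × X₂)) [hγ : IsFiniteMeasure γ]

lemma wCost_shiftedCost (hc : Measurable c) (K : ℝ) :
    wCost (shiftedCost c K) F₁ F₂ μ₁ μ₂ γ hγ = (entF F₁ γ.fst μ₁ + entF F₂ γ.snd μ₂ +
      ∫⁻ x, c (x, markovLaw γ.condKernel x) ∂γ.fst : ℝ≥0∞) + (∫ _, K ∂γ.fst : ℝ) := by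
  rw [EReal.coe_ennreal_add, EReal.coe_ennreal_add, add_assoc, ← eIntegral_coe_add_coe
    (measurable_comp_markovLaw hc γ.condKernel) (integrable_const K)]
  rfl

theorem eIntegral_circ_RCfun_add_le_wCost [TopologicalSpace X₂] [OpensMeasurableSpace X₂]
    (hF₁ : F₁.Superlinear) (hF₂ : F₂.Superlinear) [IsFiniteMeasure μ₁] [IsFiniteMeasure μ₂]
    (hc : Measurable c) (K : ℝ) (φ : X₂ →ᵇ ℝ) :
    eIntegral μ₁ (fun x => F₁.circ (RCfun (shiftedCost c K) φ x)) +
        eIntegral μ₂ (fun x => F₂.circ ((-(φ x) : ℝ) : EReal)) ≤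
      wCost (shiftedCost c K) F₁ F₂ μ₁ μ₂ γ hγ := by
  let κ := γ.condKernel
  have hφ : Integrable φ (κ ∘ₘ γ.fst) := φ.integrable _
  have hφκ := integrable_integral_kernel_bind hφ
  have hfst := hF₁.eIntegral_circ_le (μ := μ₁) (ψ := fun x => RCfun (shiftedCost c K) φ x)
    (measurable_comp_markovLaw hc κ) ((integrable_const K).add hφκ)
    fun x => (iInf_le _ (markovLaw κ x)).trans_eq (by rw [shiftedCost, add_assoc]; rfl)
  have hsnd := hF₂.eIntegral_circ_le (μ := μ₂) (ν := γ.snd)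
    (ψ := fun x => ((-(φ x) : ℝ) : EReal)) (g := fun _ => 0) (r := fun x => -φ x)
    measurable_const (φ.integrable _).neg fun x => by simp
  have hint : ∫ x, (K + ∫ y, φ y ∂(κ x)) ∂γ.fst + ∫ x, -φ x ∂γ.snd = ∫ _, K ∂γ.fst := by
    rw [integral_add (integrable_const K) hφκ, ← integral_kernel_bind hφ, condKernel_comp_fst,
      integral_neg, add_neg_cancel_right]
  rw [lintegral_zero, EReal.coe_ennreal_zero, zero_add] at hsnd
  rw [wCost_shiftedCost γ hc, ← hint, EReal.coe_add, EReal.coe_ennreal_add,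
    EReal.coe_ennreal_add]
  refine (add_le_add hfst hsnd).trans_eq ?_
  simp only [Pi.add_apply]
  abel

end WeakDuality

section DualFunctional

variable {X₁ X₂ : Type*} [TopologicalSpace X₁] [TopologicalSpace X₂] [MeasurableSpace X₂]

section Potential

variable [OpensMeasurableSpace X₂]

/-- The function `(x, p) ↦ φ₁(x) + ∫ φ₂ dp` on `X₁ × 𝒫(X₂)`, through which both dual constraints
see a pair of potentials. -/
def potential : ((X₁ →ᵇ ℝ) × (X₂ →ᵇ ℝ)) →ₗ[ℝ] C(X₁ × ProbabilityMeasure X₂, ℝ) where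
  toFun φ := ⟨fun z => φ.1 z.1 + ∫ x, φ.2 x ∂(z.2 : Measure X₂),
    (φ.1.continuous.comp continuous_fst).add
      ((ProbabilityMeasure.continuous_integral_boundedContinuousFunction φ.2).comp
        continuous_snd)⟩
  map_add' φ ψ := by
    ext z
    have h := integral_add (φ.2.integrable (z.2 : Measure X₂)) (ψ.2.integrable z.2)
    simp only [Prod.fst_add, Prod.snd_add, BoundedContinuousFunction.coe_add, Pi.add_apply, h,
      ContinuousMap.coe_mk, ContinuousMap.add_apply]
    ring
  map_smul' r φ := by
    ext z
    simp [integral_const_mul, mul_add]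

lemma potential_apply (φ : (X₁ →ᵇ ℝ) × (X₂ →ᵇ ℝ)) (z : X₁ × ProbabilityMeasure X₂) :
    potential φ z = φ.1 z.1 + ∫ x, φ.2 x ∂(z.2 : Measure X₂) := rfl

lemma integral_potential [MeasurableSpace X₁] [OpensMeasurableSpace X₁]
    (P : Measure (X₁ × ProbabilityMeasure X₂))
    [IsFiniteMeasure P] (φ : (X₁ →ᵇ ℝ) × (X₂ →ᵇ ℝ)) :
    ∫ z, potential φ z ∂P = ∫ x, φ.1 x ∂P.fst + ∫ x, φ.2 x ∂(evalKernel X₂ ∘ₘ P.snd) := by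
  have hφ₁ : Integrable φ.1 P.fst := φ.1.integrable _
  have hφ₂ := integrable_integral_kernel_bind (φ.2.integrable (evalKernel X₂ ∘ₘ P.snd))
  rw [integral_kernel_bind (φ.2.integrable _), Measure.fst,
    integral_map measurable_fst.aemeasurable hφ₁.aestronglyMeasurable, Measure.snd,
    integral_map measurable_snd.aemeasurable hφ₂.aestronglyMeasurable]
  exact integral_add (hφ₁.comp_measurable measurable_fst) (hφ₂.comp_measurable measurable_snd)

end Potential

variable [MeasurableSpace X₁]

/-- The dual functional `∫ F₁°(φ₁) dμ₁ + ∫ F₂°(φ₂) dμ₂`. -/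
def dualFunctional (F₁ F₂ : EntropyFn) (μ₁ : Measure X₁) (μ₂ : Measure X₂)
    (φ : (X₁ →ᵇ ℝ) × (X₂ →ᵇ ℝ)) : ℝ :=
  ∫ x, F₁.circReal (φ.1 x) ∂μ₁ + ∫ x, F₂.circReal (φ.2 x) ∂μ₂

namespace EntropyFn.Superlinear

variable {X : Type*} [TopologicalSpace X] [MeasurableSpace X] [OpensMeasurableSpace X]
  {F : EntropyFn} {μ : Measure X} [IsFiniteMeasure μ]

lemma integrable_circReal_boundedContinuousFunction (hF : F.Superlinear) (φ : X →ᵇ ℝ) :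
    Integrable (fun x => F.circReal (φ x)) μ :=
  hF.integrable_circReal_comp φ.continuous.measurable fun x => abs_le.1 (φ.norm_coe_le_norm x)

lemma concaveOn_integral_circReal (hF : F.Superlinear) :
    ConcaveOn ℝ univ fun φ : X →ᵇ ℝ => ∫ x, F.circReal (φ x) ∂μ := by
  refine ⟨convex_univ, fun φ _ ψ _ a b ha hb hab => ?_⟩
  have hφ := (hF.integrable_circReal_boundedContinuousFunction (μ := μ) φ).smul a
  have hψ := (hF.integrable_circReal_boundedContinuousFunction (μ := μ) ψ).smul b
  rw [← integral_smul, ← integral_smul]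
  refine (integral_add hφ hψ).symm.trans_le ?_
  exact integral_mono (hφ.add hψ) (hF.integrable_circReal_boundedContinuousFunction _) fun x =>
    hF.concaveOn_circReal.2 (mem_univ (φ x)) (mem_univ (ψ x)) ha hb hab

end EntropyFn.Superlinear

variable {F₁ F₂ : EntropyFn} (hF₁ : F₁.Superlinear) (hF₂ : F₂.Superlinear) {μ₁ : Measure X₁}
  {μ₂ : Measure X₂} [IsFiniteMeasure μ₁] [IsFiniteMeasure μ₂]

include hF₁ hF₂

lemma concaveOn_dualFunctional [OpensMeasurableSpace X₁] [OpensMeasurableSpace X₂] :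
    ConcaveOn ℝ univ (dualFunctional F₁ F₂ μ₁ μ₂) :=
  (hF₁.concaveOn_integral_circReal.comp_linearMap (LinearMap.fst ℝ _ _)).add
    (hF₂.concaveOn_integral_circReal.comp_linearMap (LinearMap.snd ℝ _ _))

lemma entF_add_entF_le_of_forall_dualFunctional_le [MetrizableSpace X₁] [MetrizableSpace X₂]
    [BorelSpace X₁] [BorelSpace X₂] {ν₁ : Measure X₁} {ν₂ : Measure X₂} [IsFiniteMeasure ν₁]
    [IsFiniteMeasure ν₂] {D : ℝ}
    (hD : ∀ φ : (X₁ →ᵇ ℝ) × (X₂ →ᵇ ℝ),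
      dualFunctional F₁ F₂ μ₁ μ₂ φ ≤ D + (∫ x, φ.1 x ∂ν₁ + ∫ x, φ.2 x ∂ν₂)) :
    ((entF F₁ ν₁ μ₁ + entF F₂ ν₂ μ₂ : ℝ≥0∞) : EReal) ≤ D := by
  have hfst (φ₂ : X₂ →ᵇ ℝ) :
      (entF F₁ ν₁ μ₁ : EReal) ≤ (D - (∫ x, F₂.circReal (φ₂ x) ∂μ₂ - ∫ x, φ₂ x ∂ν₂) : ℝ) :=
    hF₁.entF_le_of_forall_integral_le fun φ₁ => by
      have := hD (φ₁, φ₂)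
      rw [dualFunctional] at this
      linarith
  lift entF F₁ ν₁ μ₁ to ℝ≥0 using
    mt EReal.coe_ennreal_eq_top_iff.2 ((hfst 0).trans_lt (EReal.coe_lt_top _)).ne with a
  have hsnd : (entF F₂ ν₂ μ₂ : EReal) ≤ (D - a : ℝ) :=
    hF₂.entF_le_of_forall_integral_le fun φ₂ => by
      have : (a : ℝ) ≤ D - _ := EReal.coe_le_coe_iff.1 (hfst φ₂)
      linarith
  rw [EReal.coe_ennreal_add]
  calc (((a : ℝ≥0∞) : EReal) + entF F₂ ν₂ μ₂ : EReal) ≤ (a : ℝ) + (D - a : ℝ) :=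
        add_le_add_right hsnd _
    _ = D := by rw [← EReal.coe_add, add_sub_cancel]

end DualFunctional

section CompactDuality

/-- The weak transport cost with the conditional laws `γ_x` replaced by measures on `𝒫(X₂)`: the
unknown is a measure `P` on `X₁ × 𝒫(X₂)` and `γ₂` becomes the barycenter of its second marginal.
The problem is linear in `P`, which makes it accessible to convex duality. -/
def liftedCost {X₁ X₂ : Type*} [MeasurableSpace X₁] [MeasurableSpace X₂]
    (c : X₁ × ProbabilityMeasure X₂ → ℝ≥0∞) (K : ℝ) (F₁ F₂ : EntropyFn) (μ₁ : Measure X₁)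
    (μ₂ : Measure X₂) (P : Measure (X₁ × ProbabilityMeasure X₂)) : EReal :=
  (entF F₁ P.fst μ₁ + entF F₂ (evalKernel X₂ ∘ₘ P.snd) μ₂ + ∫⁻ z, c z ∂P : ℝ≥0∞) +
    (∫ _, K ∂P : ℝ)

lemma integrable_of_compactSpace {W : Type*} [TopologicalSpace W] [CompactSpace W]
    [MeasurableSpace W] [OpensMeasurableSpace W] (P : Measure W) [IsFiniteMeasure P] (f : C(W, ℝ)) :
    Integrable f P :=
  (BoundedContinuousFunction.mkOfCompact f).integrable P

lemma add_lintegral_iSup_ofReal_le {W : Type*} [TopologicalSpace W] [CompactSpace W]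
    [MeasurableSpace W] [BorelSpace W] {P : Measure W} [IsFiniteMeasure P] {f : ℕ → C(W, ℝ)}
    (hf : Monotone f) (hf₀ : ∀ k w, 0 ≤ f k w) {a : ℝ≥0∞} {B : ℝ}
    (h : ∀ k, (a : EReal) ≤ (B - ∫ w, f k w ∂P : ℝ)) :
    ((a + ∫⁻ w, ⨆ k, ENNReal.ofReal (f k w) ∂P : ℝ≥0∞) : EReal) ≤ B := by
  have hmono : Monotone fun k w => ENNReal.ofReal (f k w) :=
    fun k n hkn w => ENNReal.ofReal_le_ofReal (hf hkn w)
  have hpos (k : ℕ) : 0 ≤ ∫ w, f k w ∂P := integral_nonneg (hf₀ k)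
  have ha : 0 ≤ B - ∫ w, f 0 w ∂P :=
    EReal.coe_nonneg.1 ((EReal.coe_ennreal_nonneg a).trans (h 0))
  have hB : ((ENNReal.ofReal B : ℝ≥0∞) : EReal) = B := by
    rw [EReal.coe_ennreal_ofReal, max_eq_left (by linarith [hpos 0])]
  rw [← hB, EReal.coe_ennreal_le_coe_ennreal_iff,
    lintegral_iSup (fun k => (f k).continuous.measurable.ennreal_ofReal) hmono, ENNReal.add_iSup]
  refine iSup_le fun k => ?_
  rw [← ofReal_integral_eq_lintegral_ofReal (integrable_of_compactSpace P (f k))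
    (ae_of_all _ (hf₀ k)), ← EReal.coe_ennreal_le_coe_ennreal_iff, hB, EReal.coe_ennreal_add,
    EReal.coe_ennreal_ofReal, max_eq_left (hpos k)]
  calc (a : EReal) + (∫ w, f k w ∂P : ℝ) ≤ (B - ∫ w, f k w ∂P : ℝ) + (∫ w, f k w ∂P : ℝ) := by
        gcongr
        exact h k
    _ = B := by rw [← EReal.coe_add, sub_add_cancel]

variable {K₁ K₂ : Type*} [TopologicalSpace K₁] [CompactSpace K₁] [MetrizableSpace K₁]
  [MeasurableSpace K₁] [BorelSpace K₁] [TopologicalSpace K₂] [CompactSpace K₂]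
  [MetrizableSpace K₂] [MeasurableSpace K₂] [BorelSpace K₂] {F₁ F₂ : EntropyFn}
  (hF₁ : F₁.Superlinear) (hF₂ : F₂.Superlinear) {μ₁ : Measure K₁} {μ₂ : Measure K₂}
  [IsFiniteMeasure μ₁] [IsFiniteMeasure μ₂] {D : ℝ}

include hF₁ hF₂

lemma exists_measure_forall_dualFunctional_le {g : ℕ → C(K₁ × ProbabilityMeasure K₂, ℝ)}
    (hg : Monotone g)
    (hD : ∀ k φ, (∀ z, potential φ z ≤ g k z) → dualFunctional F₁ F₂ μ₁ μ₂ φ ≤ D) :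
    ∃ P : Measure (K₁ × ProbabilityMeasure K₂), IsFiniteMeasure P ∧ ∀ k φ,
      dualFunctional F₁ F₂ μ₁ μ₂ φ ≤ D + (∫ z, potential φ z ∂P - ∫ z, g k z ∂P) := by
  let V := ((K₁ →ᵇ ℝ) × (K₂ →ᵇ ℝ)) × C(K₁ × ProbabilityMeasure K₂, ℝ)
  let s : Set V := {v | ∃ k, v.2 ≤ g k}
  have hs : Convex ℝ s := by
    rintro v ⟨k, hk⟩ w ⟨n, hn⟩ a b ha hb hab
    refine ⟨max k n, (add_le_add (smul_le_smul_of_nonneg_left (hk.trans (hg (le_max_left k n))) ha)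
      (smul_le_smul_of_nonneg_left (hn.trans (hg (le_max_right k n))) hb)).trans_eq ?_⟩
    rw [← add_smul, hab, one_smul]
  let S : V →ₗ[ℝ] C(K₁ × ProbabilityMeasure K₂, ℝ) :=
    potential.comp (LinearMap.fst ℝ _ _) - LinearMap.snd ℝ _ _
  have hS (v : V) (z) : S v z = potential v.1 z - v.2 z := rfl
  let v₀ : V := ((BoundedContinuousFunction.const K₁ (-‖g 0‖ - 1), 0), g 0)
  obtain ⟨P, hP, hPV⟩ := exists_multiplier_measure (S := S) (s := s) (v₀ := v₀) (D := D)
    (((concaveOn_dualFunctional hF₁ hF₂).comp_linearMap (LinearMap.fst ℝ _ _)).subset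
      (subset_univ s) hs)
    (fun v ⟨k, hk⟩ hv => hD k v.1 fun z => by
      have hneg := hv z
      have hle : v.2 z ≤ g k z := hk z
      rw [hS] at hneg
      linarith)
    ⟨0, le_rfl⟩ fun z => by
      have := (abs_le.1 ((g 0).norm_coe_le_norm z)).1
      simp only [hS, v₀, potential_apply, BoundedContinuousFunction.const_apply,
        BoundedContinuousFunction.coe_zero, Pi.zero_apply, integral_zero]
      linarith
  refine ⟨P, hP, fun k φ => (hPV (φ, g k) ⟨k, le_rfl⟩).trans_eq ?_⟩
  rw [← integral_sub (integrable_of_compactSpace P _) (integrable_of_compactSpace P _)]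
  rfl

theorem exists_liftedCost_le_of_compactSpace {c : K₁ × ProbabilityMeasure K₂ → ℝ≥0∞}
    (hc : LowerSemicontinuous c) {K : ℝ}
    (hD : ∀ φ, (∀ z, (potential φ z : EReal) ≤ shiftedCost c K z.1 z.2) →
      dualFunctional F₁ F₂ μ₁ μ₂ φ ≤ D) :
    ∃ P : Measure (K₁ × ProbabilityMeasure K₂), IsFiniteMeasure P ∧
      liftedCost c K F₁ F₂ μ₁ μ₂ P ≤ D := by
  obtain ⟨f, hf, hf₀, hfc⟩ := exists_monotone_seq_continuousMap_iSup_eq IsInducing.id hc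
  have hfle (k z) : (f k z : EReal) ≤ c z := by
    rw [← hfc z, ← max_eq_left (hf₀ k z), ← EReal.coe_ennreal_ofReal]
    exact EReal.coe_ennreal_le_coe_ennreal_iff.2
      (le_iSup (fun k => ENNReal.ofReal (f k z)) k)
  obtain ⟨P, hP, hPf⟩ := exists_measure_forall_dualFunctional_le hF₁ hF₂ (μ₁ := μ₁) (μ₂ := μ₂)
    (g := fun k => f k + ContinuousMap.const _ K) (fun k n hkn => add_le_add_left (hf hkn) _)
    fun k φ hφ => hD φ fun z => (EReal.coe_le_coe (hφ z)).trans (by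
      rw [ContinuousMap.add_apply, EReal.coe_add]
      exact add_le_add_left (hfle k z) _)
  have hint (k : ℕ) : ∫ z, (f k + ContinuousMap.const _ K : C(_, ℝ)) z ∂P =
      ∫ z, f k z ∂P + ∫ _, K ∂P :=
    integral_add (integrable_of_compactSpace P (f k)) (integrable_const K)
  have hent (k : ℕ) := entF_add_entF_le_of_forall_dualFunctional_le hF₁ hF₂ (μ₁ := μ₁) (μ₂ := μ₂)
    (ν₁ := P.fst) (ν₂ := evalKernel K₂ ∘ₘ P.snd) (D := D - ∫ _, K ∂P - ∫ z, f k z ∂P) fun φ => by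
      have := hPf k φ
      rw [hint, integral_potential] at this
      linarith
  refine ⟨P, hP, ?_⟩
  have hle := add_lintegral_iSup_ofReal_le hf hf₀ (P := P) hent
  simp only [id] at hfc
  simp only [hfc] at hle
  rw [liftedCost]
  calc _ ≤ ((D - ∫ _, K ∂P : ℝ) : EReal) + (∫ _, K ∂P : ℝ) := add_le_add_left hle _
    _ = D := by rw [← EReal.coe_add, sub_add_cancel]

end CompactDuality

section Transfer

lemma exists_lowerSemicontinuous_comp_eq {W Z : Type*} [TopologicalSpace W] [MetrizableSpace W]
    [TopologicalSpace Z] {i : Z → W} (hi : IsInducing i) {c : Z → ℝ≥0∞}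
    (hc : LowerSemicontinuous c) :
    ∃ c' : W → ℝ≥0∞, LowerSemicontinuous c' ∧ ∀ z, c' (i z) = c z := by
  obtain ⟨f, -, -, hfc⟩ := exists_monotone_seq_continuousMap_iSup_eq hi hc
  exact ⟨fun w => ⨆ k, ENNReal.ofReal (f k w), lowerSemicontinuous_iSup fun k =>
    (ENNReal.continuous_ofReal.comp (f k).continuous).lowerSemicontinuous, hfc⟩

lemma EntropyFn.entF_map {X Y : Type*} [MeasurableSpace X] [MeasurableSpace Y] {i : X → Y}
    (hi : MeasurableEmbedding i) (F : EntropyFn) (ν μ : Measure X) [SigmaFinite ν] [SigmaFinite μ] :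
    entF F (ν.map i) (μ.map i) = entF F ν μ := by
  rw [entF, entF, hi.lintegral_map, hi.singularPart_map,
    Measure.map_apply hi.measurable MeasurableSet.univ, preimage_univ]
  congr 1
  refine lintegral_congr_ae ?_
  filter_upwards [hi.rnDeriv_map ν μ] with x hx
  rw [hx]

variable {X₁ X₂ K₁ K₂ : Type*} [MeasurableSpace X₁] [MeasurableSpace X₂] [MeasurableSpace K₁]
  [MeasurableSpace K₂]

lemma evalKernel_comp_map_pushforward {f : X₂ → K₂} (hf : Measurable f)
    (hp : Measurable (pushforward hf)) (Q : Measure (ProbabilityMeasure X₂)) :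
    evalKernel K₂ ∘ₘ Q.map (pushforward hf) = (evalKernel X₂ ∘ₘ Q).map f := by
  ext s hs
  rw [Measure.bind_apply hs (Kernel.aemeasurable _), lintegral_map
    ((evalKernel K₂).measurable_coe hs) hp, Measure.map_apply hf hs,
    Measure.bind_apply (hf hs) (Kernel.aemeasurable _)]
  simp only [evalKernel_apply, coe_pushforward, Measure.map_apply hf hs]

section Map

variable {i₁ : X₁ → K₁} {i₂ : X₂ → K₂} (hi₁ : MeasurableEmbedding i₁)
  (hi₂ : MeasurableEmbedding i₂) (hp : MeasurableEmbedding (pushforward hi₂.measurable))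

include hi₁ hp

lemma exists_map_prodMap_pushforward_eq {P : Measure (K₁ × ProbabilityMeasure K₂)}
    [IsFiniteMeasure P] (h₁ : P.fst (range i₁)ᶜ = 0)
    (h₂ : (evalKernel K₂ ∘ₘ P.snd) (range i₂)ᶜ = 0) :
    ∃ Q : Measure (X₁ × ProbabilityMeasure X₂), IsFiniteMeasure Q ∧
      Q.map (Prod.map i₁ (pushforward hi₂.measurable)) = P := by
  have hsnd : P.snd (range (pushforward hi₂.measurable))ᶜ = 0 := by
    rw [Measure.bind_apply hi₂.measurableSet_range.compl (Kernel.aemeasurable _),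
      lintegral_eq_zero_iff ((evalKernel K₂).measurable_coe hi₂.measurableSet_range.compl)] at h₂
    rw [range_pushforward hi₂]
    exact h₂
  have hrange : P (range (Prod.map i₁ (pushforward hi₂.measurable)))ᶜ = 0 := by
    rw [Measure.fst_apply hi₁.measurableSet_range.compl] at h₁
    rw [Measure.snd_apply hp.measurableSet_range.compl] at hsnd
    rw [range_prodMap, compl_prod_eq_union, prod_univ, univ_prod]
    exact measure_union_null h₁ hsnd
  have hj := hi₁.prodMap hp
  refine ⟨P.comap (Prod.map i₁ (pushforward hi₂.measurable)), inferInstance, ?_⟩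
  rw [hj.map_comap, Measure.restrict_eq_self_of_ae_mem]
  exact hrange

lemma liftedCost_map {c : X₁ × ProbabilityMeasure X₂ → ℝ≥0∞}
    {c' : K₁ × ProbabilityMeasure K₂ → ℝ≥0∞}
    (hc : ∀ z, c' (Prod.map i₁ (pushforward hi₂.measurable) z) = c z) (K : ℝ) (F₁ F₂ : EntropyFn)
    (μ₁ : Measure X₁) (μ₂ : Measure X₂) [IsFiniteMeasure μ₁] [IsFiniteMeasure μ₂]
    (Q : Measure (X₁ × ProbabilityMeasure X₂)) [IsFiniteMeasure Q] :
    liftedCost c' K F₁ F₂ (μ₁.map i₁) (μ₂.map i₂)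
      (Q.map (Prod.map i₁ (pushforward hi₂.measurable))) = liftedCost c K F₁ F₂ μ₁ μ₂ Q := by
  have hj := hi₁.prodMap hp
  have hfst : (Q.map (Prod.map i₁ (pushforward hi₂.measurable))).fst = Q.fst.map i₁ := by
    rw [Measure.fst, Measure.map_map measurable_fst hj.measurable, Measure.fst,
      Measure.map_map hi₁.measurable measurable_fst]
    rfl
  have hsnd : (Q.map (Prod.map i₁ (pushforward hi₂.measurable))).snd =
      Q.snd.map (pushforward hi₂.measurable) := by
    rw [Measure.snd, Measure.map_map measurable_snd hj.measurable, Measure.snd,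
      Measure.map_map hp.measurable measurable_snd]
    rfl
  rw [liftedCost, liftedCost, hfst, hsnd, evalKernel_comp_map_pushforward hi₂.measurable
    hp.measurable, EntropyFn.entF_map hi₁, EntropyFn.entF_map hi₂, hj.lintegral_map,
    hj.integral_map]
  simp only [hc]

end Map

end Transfer

section StrongDuality

lemma entF_ne_top_of_liftedCost_le {X₁ X₂ : Type*} [MeasurableSpace X₁] [MeasurableSpace X₂]
    {c : X₁ × ProbabilityMeasure X₂ → ℝ≥0∞} {K : ℝ} {F₁ F₂ : EntropyFn} {μ₁ : Measure X₁}
    {μ₂ : Measure X₂} {P : Measure (X₁ × ProbabilityMeasure X₂)} {D : ℝ}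
    (h : liftedCost c K F₁ F₂ μ₁ μ₂ P ≤ D) :
    entF F₁ P.fst μ₁ ≠ ∞ ∧ entF F₂ (evalKernel X₂ ∘ₘ P.snd) μ₂ ≠ ∞ := by
  rw [← ENNReal.add_ne_top]
  intro htop
  rw [liftedCost, htop, top_add, EReal.coe_ennreal_top, EReal.top_add_coe] at h
  exact h.not_gt (EReal.coe_lt_top D)

lemma compl_range_eq_zero_of_entF_ne_top {X Y : Type*} [MeasurableSpace X]
    [MeasurableSpace Y] {i : X → Y}
    (hi : MeasurableEmbedding i) {F : EntropyFn} (hF : F.Superlinear) {μ : Measure X}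
    {ν : Measure Y} [IsFiniteMeasure μ] [IsFiniteMeasure ν] (h : entF F ν (μ.map i) ≠ ∞) :
    ν (range i)ᶜ = 0 :=
  hF.absolutelyContinuous_of_entF_ne_top h (by simp [hi.map_apply])

section Disintegration

variable {X₁ X₂ : Type*} [TopologicalSpace X₁] [MeasurableSpace X₁] [OpensMeasurableSpace X₁]
  [TopologicalSpace X₂] [PolishSpace X₂] [MeasurableSpace X₂] [BorelSpace X₂]

-- The conditional laws of `P`, measures on `𝒫(X₂)`, are replaced by their barycenters; by Jensen's
-- inequality this does not increase the cost.
theorem exists_wCost_le_liftedCost [Nonempty X₂] {c : X₁ × ProbabilityMeasure X₂ → ℝ≥0∞}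
    (hc : LowerSemicontinuous c) (hconv : ∀ x, ConvexOnProbabilityMeasure fun p => c (x, p)) (K : ℝ)
    (F₁ F₂ : EntropyFn) (μ₁ : Measure X₁) (μ₂ : Measure X₂)
    (P : Measure (X₁ × ProbabilityMeasure X₂)) [IsFiniteMeasure P] :
    ∃ (γ : Measure (X₁ × X₂)) (hγ : IsFiniteMeasure γ),
      wCost (shiftedCost c K) F₁ F₂ μ₁ μ₂ γ hγ ≤ liftedCost c K F₁ F₂ μ₁ μ₂ P := by
  have : Nonempty (ProbabilityMeasure X₂) :=
    ⟨⟨Measure.dirac (Classical.arbitrary X₂), inferInstance⟩⟩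
  let κ : Kernel X₁ X₂ := evalKernel X₂ ∘ₖ P.condKernel
  let γ : Measure (X₁ × X₂) := P.fst ⊗ₘ κ
  have hfst : γ.fst = P.fst := Measure.fst_compProd _ _
  have hsnd : γ.snd = evalKernel X₂ ∘ₘ P.snd := by
    rw [← condKernel_comp_fst P, Measure.comp_assoc, Measure.snd_compProd]
  have hκ : ∀ᵐ x ∂P.fst, markovLaw γ.condKernel x = markovLaw κ x := by
    have h := eq_condKernel_of_measure_eq_compProd (ρ := γ) κ (by rw [hfst])
    rw [hfst] at h
    exact h.mono fun x hx => Subtype.ext hx.symm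
  have hjensen : ∫⁻ x, c (x, markovLaw γ.condKernel x) ∂P.fst ≤ ∫⁻ z, c z ∂P := calc
    _ = ∫⁻ x, c (x, markovLaw κ x) ∂P.fst :=
        lintegral_congr_ae (hκ.mono fun x hx => by rw [hx])
    _ ≤ ∫⁻ x, ∫⁻ p, c (x, p) ∂P.condKernel x ∂P.fst := lintegral_mono fun x =>
        (hconv x).le_lintegral_of_eq_barycenter (hc.comp (Continuous.prodMk_right x))
          (Kernel.comp_apply _ _ _)
    _ = ∫⁻ z, c z ∂P := by
        rw [← Measure.lintegral_compProd hc.measurable, P.disintegrate]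
  refine ⟨γ, inferInstance, ?_⟩
  rw [wCost_shiftedCost γ hc.measurable, liftedCost, hfst, hsnd, integral_const, integral_const,
    Measure.real, Measure.real, Measure.fst_univ]
  gcongr
  exact EReal.coe_ennreal_le_coe_ennreal_iff.2 (by gcongr)

end Disintegration

variable {X₁ X₂ : Type*} [TopologicalSpace X₁] [PolishSpace X₁] [MeasurableSpace X₁]
  [BorelSpace X₁] [TopologicalSpace X₂] [PolishSpace X₂] [MeasurableSpace X₂] [BorelSpace X₂]

theorem exists_wCost_le_of_forall_dualFunctional_le [Nonempty X₂]
    {c : X₁ × ProbabilityMeasure X₂ → ℝ≥0∞} (hc : LowerSemicontinuous c)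
    (hconv : ∀ x, ConvexOnProbabilityMeasure fun p => c (x, p)) {K : ℝ} {F₁ F₂ : EntropyFn}
    (hF₁ : F₁.Superlinear) (hF₂ : F₂.Superlinear) {μ₁ : Measure X₁} {μ₂ : Measure X₂}
    [IsFiniteMeasure μ₁] [IsFiniteMeasure μ₂] {D : ℝ}
    (hD : ∀ φ, (∀ z, (potential φ z : EReal) ≤ shiftedCost c K z.1 z.2) →
      dualFunctional F₁ F₂ μ₁ μ₂ φ ≤ D) :
    ∃ (γ : Measure (X₁ × X₂)) (hγ : IsFiniteMeasure γ),
      wCost (shiftedCost c K) F₁ F₂ μ₁ μ₂ γ hγ ≤ D := by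
  obtain ⟨i₁, hi₁⟩ := exists_isEmbedding_hilbertCube X₁
  obtain ⟨i₂, hi₂⟩ := exists_isEmbedding_hilbertCube X₂
  have hm₁ := hi₁.continuous.measurableEmbedding hi₁.injective
  have hm₂ := hi₂.continuous.measurableEmbedding hi₂.injective
  have hp := measurableEmbedding_pushforward hi₂
  obtain ⟨c', hc', hc'c⟩ := exists_lowerSemicontinuous_comp_eq
    (hi₁.prodMap (isEmbedding_pushforward hi₂)).isInducing hc
  obtain ⟨P, hP, hPD⟩ := exists_liftedCost_le_of_compactSpace hF₁ hF₂ (μ₁ := μ₁.map i₁)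
    (μ₂ := μ₂.map i₂) hc' (K := K) (D := D) fun φ hφ => by
      have h := hD (φ.1.compContinuous ⟨i₁, hi₁.continuous⟩,
        φ.2.compContinuous ⟨i₂, hi₂.continuous⟩) fun z => by
          have := hφ (Prod.map i₁ (pushforward hi₂.continuous.measurable) z)
          rw [shiftedCost, hc'c, potential_apply, Prod.map_snd, coe_pushforward,
            hm₂.integral_map] at this
          exact this
      rw [dualFunctional, hm₁.integral_map, hm₂.integral_map]
      exact h
  obtain ⟨hP₁, hP₂⟩ := entF_ne_top_of_liftedCost_le hPD
  obtain ⟨Q, hQ, rfl⟩ := exists_map_prodMap_pushforward_eq hm₁ hm₂ hp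
    (compl_range_eq_zero_of_entF_ne_top hm₁ hF₁ hP₁)
    (compl_range_eq_zero_of_entF_ne_top hm₂ hF₂ hP₂)
  obtain ⟨γ, hγ, hγQ⟩ := exists_wCost_le_liftedCost hc hconv K F₁ F₂ μ₁ μ₂ Q
  exact ⟨γ, hγ, hγQ.trans ((liftedCost_map hm₁ hm₂ hp hc'c K F₁ F₂ μ₁ μ₂ Q).symm.trans_le hPD)⟩

end StrongDuality

section DualPrograms

lemma exists_boundedContinuousFunction_comp_eq {X : Type*} [TopologicalSpace X] {f : ℝ → ℝ}
    {s : Set ℝ} (hs : IsCompact s) (hf : ContinuousOn f s) (φ : X →ᵇ ℝ) (hφ : ∀ x, φ x ∈ s) :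
    ∃ ψ : X →ᵇ ℝ, ∀ x, ψ x = f (φ x) := by
  obtain ⟨M, hM⟩ := hs.exists_bound_of_continuousOn hf
  exact ⟨.ofNormedAddCommGroup (fun x => f (φ x)) (hf.comp_continuous φ.continuous hφ) M
    fun x => hM _ (hφ x), fun _ => rfl⟩

namespace EntropyFn.Superlinear

variable {X : Type*} [TopologicalSpace X] {F : EntropyFn}

lemma exists_coe_eq_revConj (hF : F.Superlinear) {ψ : X →ᵇ ℝ} {b : ℝ} (hb : (b : EReal) < F.F 0)
    (hψ : ∀ x, ψ x ≤ b) : ∃ φ : X →ᵇ ℝ, ∀ x, (φ x : EReal) = F.revConj (ψ x) := by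
  have hlt {y : ℝ} (hy : y ≤ b) : (y : EReal) < F.F 0 := (EReal.coe_le_coe hy).trans_lt hb
  obtain ⟨φ, hφ⟩ := exists_boundedContinuousFunction_comp_eq isCompact_Icc
    (hF.continuousOn_toReal_revConj.mono fun y (hy : y ∈ Icc (-‖ψ‖) b) => hlt hy.2) ψ
    fun x => ⟨(abs_le.1 (ψ.norm_coe_le_norm x)).1, hψ x⟩
  exact ⟨φ, fun x => by rw [hφ, hF.coe_toReal_revConj (hlt (hψ x))]⟩

lemma circReal_sub_lt (hF : F.Superlinear) (φ : ℝ) {ε : ℝ} (hε : 0 < ε) :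
    ((F.circReal φ - ε : ℝ) : EReal) < F.F 0 := by
  have hle := F.circ_le_mul_add φ le_rfl
  rw [EReal.coe_zero, mul_zero, zero_add, ← hF.coe_circReal] at hle
  exact (EReal.coe_lt_coe (sub_lt_self _ hε)).trans_le hle

lemma exists_eq_circReal_sub (hF : F.Superlinear) (φ : X →ᵇ ℝ) {ε : ℝ} (hε : 0 < ε) :
    ∃ ψ : X →ᵇ ℝ, (∃ b : ℝ, (b : EReal) < F.F 0 ∧ ∀ x, ψ x ≤ b) ∧
      ∀ x, ψ x = F.circReal (φ x) - ε := by
  have hφ x := abs_le.1 (φ.norm_coe_le_norm x)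
  obtain ⟨ψ, hψ⟩ := exists_boundedContinuousFunction_comp_eq isCompact_Icc
    (hF.continuous_circReal.sub continuous_const).continuousOn φ hφ
  refine ⟨ψ, ⟨F.circReal ‖φ‖ - ε, hF.circReal_sub_lt _ hε, fun x => ?_⟩, hψ⟩
  rw [hψ]
  exact sub_le_sub_right (hF.circReal_mono (hφ x).2) ε

lemma revConj_circReal_sub_le (hF : F.Superlinear) (φ : ℝ) {ε : ℝ} (hε : 0 < ε) :
    F.revConj (F.circReal φ - ε) ≤ φ :=
  (hF.revConj_le_iff (hF.circReal_sub_lt φ hε).le).2 (sub_le_self _ hε.le)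

end EntropyFn.Superlinear

variable {X₁ X₂ : Type*} [TopologicalSpace X₁] [TopologicalSpace X₂] [MeasurableSpace X₂]

lemma mem_lamSet_iff [OpensMeasurableSpace X₂] {C : X₁ → ProbabilityMeasure X₂ → EReal}
    {F₁ F₂ : EntropyFn} (hF₁ : F₁.Superlinear) (hF₂ : F₂.Superlinear)
    {φ : (X₁ →ᵇ ℝ) × (X₂ →ᵇ ℝ)} :
    φ ∈ lamSet C F₁ F₂ ↔ ∀ z : X₁ × ProbabilityMeasure X₂, (potential φ z : EReal) ≤ C z.1 z.2 := by
  simp [lamSet, hF₁.interior_circDom, hF₂.interior_circDom, potential_apply]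

variable [MeasurableSpace X₁] (C : X₁ → ProbabilityMeasure X₂ → EReal) (F₁ F₂ : EntropyFn)
  (μ₁ : Measure X₁) (μ₂ : Measure X₂)

/-- The value of the dual program over `Λ`. -/
def dualValue : EReal :=
  sSup {e : EReal | ∃ φ ∈ lamSet C F₁ F₂,
    e = eIntegral μ₁ (fun x => F₁.circ (φ.1 x)) + eIntegral μ₂ (fun x => F₂.circ (φ.2 x))}

/-- The value of the dual program over `Λ_R`. -/
def revDualValue : EReal :=
  sSup {e : EReal | ∃ φ ∈ lamRSet C F₁ F₂, e = ((∫ x, φ.1 x ∂μ₁) + ∫ x, φ.2 x ∂μ₂ : ℝ)}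

/-- The value of the dual program in a single potential `φ` on `X₂`, the first one having been
optimised out: it is `R_C φ`. -/
def semiDualValue : EReal :=
  sSup {e : EReal | ∃ φ : X₂ →ᵇ ℝ,
    e = eIntegral μ₁ (fun x => F₁.circ (RCfun C φ x)) +
      eIntegral μ₂ (fun x => F₂.circ ((-(φ x) : ℝ) : EReal))}

variable {C F₁ F₂ μ₁ μ₂} [OpensMeasurableSpace X₂] (hF₁ : F₁.Superlinear) (hF₂ : F₂.Superlinear)

include hF₁ hF₂

lemma dualValue_le_semiDualValue :
    dualValue C F₁ F₂ μ₁ μ₂ ≤ semiDualValue C F₁ F₂ μ₁ μ₂ := by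
  refine sSup_le ?_
  rintro _ ⟨φ, hφ, rfl⟩
  rw [mem_lamSet_iff hF₁ hF₂] at hφ
  refine (add_le_add ?_ ?_).trans (le_sSup ⟨-φ.2, rfl⟩)
  · refine eIntegral_mono_ae (ae_of_all _ fun x => F₁.circ_mono (le_iInf fun p => ?_))
    have := hφ (x, p)
    simp only [BoundedContinuousFunction.coe_neg, Pi.neg_apply, integral_neg]
    rwa [EReal.coe_neg, ← sub_eq_add_neg, EReal.le_sub_iff_add_le (by simp) (by simp),
      ← EReal.coe_add]
  · simp

variable [OpensMeasurableSpace X₁] [IsFiniteMeasure μ₁] [IsFiniteMeasure μ₂]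

lemma eIntegral_circ_add_eq_dualFunctional (φ : (X₁ →ᵇ ℝ) × (X₂ →ᵇ ℝ)) :
    eIntegral μ₁ (fun x => F₁.circ (φ.1 x)) + eIntegral μ₂ (fun x => F₂.circ (φ.2 x)) =
      dualFunctional F₁ F₂ μ₁ μ₂ φ := by
  simp only [← hF₁.coe_circReal, ← hF₂.coe_circReal]
  rw [eIntegral_coe (hF₁.integrable_circReal_boundedContinuousFunction φ.1),
    eIntegral_coe (hF₂.integrable_circReal_boundedContinuousFunction φ.2), dualFunctional,
    EReal.coe_add]

lemma dualFunctional_le_dualValue {φ : (X₁ →ᵇ ℝ) × (X₂ →ᵇ ℝ)}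
    (hφ : ∀ z : X₁ × ProbabilityMeasure X₂, (potential φ z : EReal) ≤ C z.1 z.2) :
    (dualFunctional F₁ F₂ μ₁ μ₂ φ : EReal) ≤ dualValue C F₁ F₂ μ₁ μ₂ :=
  le_sSup ⟨φ, (mem_lamSet_iff hF₁ hF₂).2 hφ,
    (eIntegral_circ_add_eq_dualFunctional hF₁ hF₂ φ).symm⟩

lemma revDualValue_le_dualValue :
    revDualValue C F₁ F₂ μ₁ μ₂ ≤ dualValue C F₁ F₂ μ₁ μ₂ := by
  refine sSup_le ?_
  rintro _ ⟨ψ, ⟨⟨b₁, hb₁, hψ₁⟩, ⟨b₂, hb₂, hψ₂⟩, hψ⟩, rfl⟩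
  obtain ⟨φ₁, hφ₁⟩ := hF₁.exists_coe_eq_revConj hb₁ hψ₁
  obtain ⟨φ₂, hφ₂⟩ := hF₂.exists_coe_eq_revConj hb₂ hψ₂
  have hle₁ x : ψ.1 x ≤ F₁.circReal (φ₁ x) :=
    (hF₁.revConj_le_iff ((EReal.coe_le_coe (hψ₁ x)).trans hb₁.le)).1 (hφ₁ x).ge
  have hle₂ x : ψ.2 x ≤ F₂.circReal (φ₂ x) :=
    (hF₂.revConj_le_iff ((EReal.coe_le_coe (hψ₂ x)).trans hb₂.le)).1 (hφ₂ x).ge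
  refine le_trans (EReal.coe_le_coe (add_le_add
    (integral_mono (ψ.1.integrable _) (hF₁.integrable_circReal_boundedContinuousFunction φ₁) hle₁)
    (integral_mono (ψ.2.integrable _) (hF₂.integrable_circReal_boundedContinuousFunction φ₂) hle₂)))
    (dualFunctional_le_dualValue hF₁ hF₂ (φ := (φ₁, φ₂)) fun ⟨x, p⟩ => ?_)
  have := hψ x p
  simp only [← hφ₁, ← hφ₂] at this
  rwa [eIntegral_coe (φ₂.integrable _), ← EReal.coe_add] at this

lemma dualFunctional_le_revDualValue_add {φ : (X₁ →ᵇ ℝ) × (X₂ →ᵇ ℝ)}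
    (hφ : ∀ z : X₁ × ProbabilityMeasure X₂, (potential φ z : EReal) ≤ C z.1 z.2) {ε : ℝ}
    (hε : 0 < ε) :
    ((dualFunctional F₁ F₂ μ₁ μ₂ φ - ε * (μ₁.real univ + μ₂.real univ) : ℝ) : EReal) ≤
      revDualValue C F₁ F₂ μ₁ μ₂ := by
  obtain ⟨ψ₁, hb₁, hψ₁⟩ := hF₁.exists_eq_circReal_sub φ.1 hε
  obtain ⟨ψ₂, hb₂, hψ₂⟩ := hF₂.exists_eq_circReal_sub φ.2 hε
  refine le_sSup ⟨(ψ₁, ψ₂), ⟨hb₁, hb₂, fun x p => ?_⟩, ?_⟩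
  · have hle₁ : F₁.revConj (ψ₁ x) ≤ φ.1 x := by
      rw [hψ₁]
      exact hF₁.revConj_circReal_sub_le _ hε
    have hle₂ : eIntegral (p : Measure X₂) (fun y => F₂.revConj (ψ₂ y)) ≤
        (∫ y, φ.2 y ∂(p : Measure X₂) : ℝ) := by
      rw [← eIntegral_coe (φ.2.integrable _)]
      refine eIntegral_mono_ae (ae_of_all _ fun y => ?_)
      rw [hψ₂]
      exact hF₂.revConj_circReal_sub_le _ hε
    exact (add_le_add hle₁ hle₂).trans (hφ (x, p))
  · simp only [hψ₁, hψ₂]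
    rw [integral_sub (hF₁.integrable_circReal_boundedContinuousFunction φ.1) (integrable_const _),
      integral_sub (hF₂.integrable_circReal_boundedContinuousFunction φ.2) (integrable_const _),
      integral_const, integral_const, dualFunctional, smul_eq_mul, smul_eq_mul]
    congr 1
    ring

lemma dualValue_le_revDualValue :
    dualValue C F₁ F₂ μ₁ μ₂ ≤ revDualValue C F₁ F₂ μ₁ μ₂ := by
  refine sSup_le ?_
  rintro _ ⟨φ, hφ, rfl⟩
  rw [mem_lamSet_iff hF₁ hF₂] at hφ
  rw [eIntegral_circ_add_eq_dualFunctional hF₁ hF₂]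
  have hlim : Tendsto (fun ε : ℝ => ((dualFunctional F₁ F₂ μ₁ μ₂ φ -
      ε * (μ₁.real univ + μ₂.real univ) : ℝ) : EReal)) (𝓝[>] 0)
      (𝓝 (dualFunctional F₁ F₂ μ₁ μ₂ φ : EReal)) :=
    (Continuous.tendsto' (continuous_coe_real_ereal.comp (by fun_prop)) 0 _
      (by simp)).mono_left nhdsWithin_le_nhds
  exact le_of_tendsto hlim (eventually_mem_nhdsWithin.mono fun ε hε =>
    dualFunctional_le_revDualValue_add hF₁ hF₂ hφ hε)

end DualPrograms

section Duality

lemma semiDualValue_le_wOpt {X₁ X₂ : Type*} [MeasurableSpace X₁] [TopologicalSpace X₂]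
    [MeasurableSpace X₂] [OpensMeasurableSpace X₂] [StandardBorelSpace X₂] [Nonempty X₂]
    {c : X₁ × ProbabilityMeasure X₂ → ℝ≥0∞} (hc : Measurable c) (K : ℝ) {F₁ F₂ : EntropyFn}
    (hF₁ : F₁.Superlinear) (hF₂ : F₂.Superlinear) {μ₁ : Measure X₁} {μ₂ : Measure X₂}
    [IsFiniteMeasure μ₁] [IsFiniteMeasure μ₂] :
    semiDualValue (shiftedCost c K) F₁ F₂ μ₁ μ₂ ≤ wOpt (shiftedCost c K) F₁ F₂ μ₁ μ₂ := by
  refine sSup_le ?_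
  rintro _ ⟨φ, rfl⟩
  refine le_sInf ?_
  rintro _ ⟨γ, hγ, rfl⟩
  exact eIntegral_circ_RCfun_add_le_wCost γ hF₁ hF₂ hc K φ

lemma wOpt_le_dualValue {X₁ X₂ : Type*} [TopologicalSpace X₁] [PolishSpace X₁] [MeasurableSpace X₁]
    [BorelSpace X₁] [TopologicalSpace X₂] [PolishSpace X₂] [MeasurableSpace X₂] [BorelSpace X₂]
    [Nonempty X₂] {c : X₁ × ProbabilityMeasure X₂ → ℝ≥0∞} (hc : LowerSemicontinuous c)
    (hconv : ∀ x, ConvexOnProbabilityMeasure fun p => c (x, p)) (K : ℝ)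
    {F₁ F₂ : EntropyFn} (hF₁ : F₁.Superlinear) (hF₂ : F₂.Superlinear) {μ₁ : Measure X₁}
    {μ₂ : Measure X₂} [IsFiniteMeasure μ₁] [IsFiniteMeasure μ₂] :
    wOpt (shiftedCost c K) F₁ F₂ μ₁ μ₂ ≤ dualValue (shiftedCost c K) F₁ F₂ μ₁ μ₂ := by
  have hbot : dualValue (shiftedCost c K) F₁ F₂ μ₁ μ₂ ≠ ⊥ :=
    ne_bot_of_le_ne_bot (EReal.coe_ne_bot _) (dualFunctional_le_dualValue hF₁ hF₂
      (φ := (.const X₁ K, 0)) fun z => by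
        simpa [potential_apply, shiftedCost] using
          le_add_of_nonneg_left (a := (K : EReal)) (EReal.coe_ennreal_nonneg (c z)))
  induction hD : dualValue (shiftedCost c K) F₁ F₂ μ₁ μ₂ with
  | bot => exact absurd hD hbot
  | top => exact le_top
  | coe D =>
    obtain ⟨γ, hγ, hle⟩ := exists_wCost_le_of_forall_dualFunctional_le hc hconv (K := K) hF₁ hF₂
      (μ₁ := μ₁) (μ₂ := μ₂) (D := D) fun φ hφ =>
        EReal.coe_le_coe_iff.1 ((dualFunctional_le_dualValue hF₁ hF₂ hφ).trans_eq hD)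
    exact le_trans (sInf_le ⟨γ, hγ, rfl⟩) hle

end Duality

theorem stmt0_general {X₁ X₂ : Type*} [TopologicalSpace X₁] [PolishSpace X₁] [MeasurableSpace X₁]
    [BorelSpace X₁] [TopologicalSpace X₂] [PolishSpace X₂] [MeasurableSpace X₂] [BorelSpace X₂]
    [Nonempty X₂] (C : X₁ → ProbabilityMeasure X₂ → EReal)
    (hClsc : LowerSemicontinuous fun q : X₁ × ProbabilityMeasure X₂ => C q.1 q.2)
    (hCbdd : ∃ K : ℝ, ∀ x p, (K : EReal) ≤ C x p)
    (hCconv : ∀ (x : X₁) (p q m : ProbabilityMeasure X₂) (t : ℝ), 0 ≤ t → t ≤ 1 →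
      (m : Measure X₂) = ENNReal.ofReal t • (p : Measure X₂)
          + ENNReal.ofReal (1 - t) • (q : Measure X₂) →
      C x m ≤ (t : EReal) * C x p + ((1 - t : ℝ) : EReal) * C x q)
    {F₁ F₂ : EntropyFn} (hF₁ : F₁.Superlinear) (hF₂ : F₂.Superlinear) (μ₁ : Measure X₁)
    (μ₂ : Measure X₂) [IsFiniteMeasure μ₁] [IsFiniteMeasure μ₂] :
    wOpt C F₁ F₂ μ₁ μ₂ = dualValue C F₁ F₂ μ₁ μ₂ ∧
      wOpt C F₁ F₂ μ₁ μ₂ = revDualValue C F₁ F₂ μ₁ μ₂ ∧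
      wOpt C F₁ F₂ μ₁ μ₂ = semiDualValue C F₁ F₂ μ₁ μ₂ := by
  obtain ⟨K, hK⟩ := hCbdd
  obtain ⟨c, hc, hconv, rfl⟩ := exists_eq_shiftedCost C hClsc hK hCconv
  have hstrong := wOpt_le_dualValue hc hconv K hF₁ hF₂ (μ₁ := μ₁) (μ₂ := μ₂)
  have hweak := semiDualValue_le_wOpt hc.measurable K hF₁ hF₂ (μ₁ := μ₁) (μ₂ := μ₂)
  have hdual := dualValue_le_semiDualValue hF₁ hF₂ (C := shiftedCost c K) (μ₁ := μ₁) (μ₂ := μ₂)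
  have hrev : dualValue (shiftedCost c K) F₁ F₂ μ₁ μ₂ =
      revDualValue (shiftedCost c K) F₁ F₂ μ₁ μ₂ :=
    (dualValue_le_revDualValue hF₁ hF₂).antisymm (revDualValue_le_dualValue hF₁ hF₂)
  have heq := hstrong.antisymm (hdual.trans hweak)
  exact ⟨heq, heq.trans hrev, (hstrong.trans hdual).antisymm hweak⟩

theorem stmt0
    {X₁ : Type*} [MetricSpace X₁] [PolishSpace X₁] [MeasurableSpace X₁] [BorelSpace X₁]
    [LocallyCompactSpace X₁]
    {X₂ : Type*} [MetricSpace X₂] [PolishSpace X₂] [MeasurableSpace X₂] [BorelSpace X₂]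
    [LocallyCompactSpace X₂] [Nonempty X₂]
    (C : X₁ → ProbabilityMeasure X₂ → EReal)
    (hClsc : LowerSemicontinuous fun q : X₁ × ProbabilityMeasure X₂ => C q.1 q.2)
    (hCbdd : ∃ K : ℝ, ∀ x p, (K : EReal) ≤ C x p)
    (hCconv : ∀ (x : X₁) (p q m : ProbabilityMeasure X₂) (t : ℝ), 0 ≤ t → t ≤ 1 →
      (m : Measure X₂) = ENNReal.ofReal t • (p : Measure X₂)
          + ENNReal.ofReal (1 - t) • (q : Measure X₂) →
      C x m ≤ (t : EReal) * C x p + ((1 - t : ℝ) : EReal) * C x q)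
    (F₁ F₂ : EntropyFn) (hF₁ : F₁.Superlinear) (hF₂ : F₂.Superlinear) (hBM : HasBM X₂ F₂)
    (μ₁ : Measure X₁) (μ₂ : Measure X₂) [IsFiniteMeasure μ₁] [IsFiniteMeasure μ₂] :
    wOpt C F₁ F₂ μ₁ μ₂
        = sSup { e : EReal | ∃ φ ∈ lamSet C F₁ F₂,
            e = eIntegral μ₁ (fun x => F₁.circ (φ.1 x)) +
                eIntegral μ₂ (fun x => F₂.circ (φ.2 x)) } ∧
    wOpt C F₁ F₂ μ₁ μ₂
        = sSup { e : EReal | ∃ φ ∈ lamRSet C F₁ F₂,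
            e = (((∫ x, φ.1 x ∂μ₁) + ∫ x, φ.2 x ∂μ₂ : ℝ) : EReal) } ∧
    wOpt C F₁ F₂ μ₁ μ₂
        = sSup { e : EReal | ∃ φ : X₂ →ᵇ ℝ,
            e = eIntegral μ₁ (fun x₁ => F₁.circ (RCfun C φ x₁)) +
                eIntegral μ₂ (fun x₂ => F₂.circ (((-(φ x₂) : ℝ) : EReal))) } :=
  stmt0_general C hClsc hCbdd hCconv hF₁ hF₂ μ₁ μ₂
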